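/- arXiv:1707.03492 — 11 statements merged into one kernel-verified Lean document; each statement's English description precedes it below -/
import Mathlib

section
/- Let n ≥ 2 be an integer and let x : ℕ → Fin (n+1) → ℝ be a sequence of configurations of n+1 points on the real line such that for every time t and every index i with 1 ≤ i ≤ n−1 one has x (t+1) i = (x t (i−1) + x t (i+1))/2. Suppose that x t 0 → a and x t n → b as t → ∞, for some real numbers a and b. Then for every 0 ≤ i ≤ n, x t i → a + (i/n)·(b − a) as t → ∞; in particular the points converge to equidistant positions between a and b. -/
open Filter Topology

/-!
The distance from the `i`-th point to its target is at each step at most the average of its two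
neighbours' previous distances. A maximum principle bounds these distances, so the limit superior in
time is finite; it inherits the averaging inequality, that is, it is convex in `i`. Since it
vanishes at both ends, convexity forces it to be nonpositive.
-/

section Convex

variable {𝕜 : Type*} [Field 𝕜] [LinearOrder 𝕜] [IsStrictOrderedRing 𝕜] {n : ℕ} {v : ℕ → 𝕜}

-- The slopes `v i / i` of the chords from `(0, 0)` increase; multiplying out covers `i = 0`.
theorem succ_mul_le_mul_succ_of_le_average
    (hv : ∀ i, i + 2 ≤ n → v (i + 1) ≤ (v i + v (i + 2)) / 2) (h₀ : v 0 ≤ 0)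
    {i : ℕ} (hi : i + 1 ≤ n) : (i + 1) * v i ≤ i * v (i + 1) := by
  induction i with
  | zero => simpa using h₀
  | succ i ih =>
    have ih' := ih (by lia)
    have hscaled := mul_le_mul_of_nonneg_left (hv i hi) (by positivity : (0 : 𝕜) ≤ 2 * (i + 1))
    push_cast
    linarith

theorem nonpos_of_le_average
    (hv : ∀ i, i + 2 ≤ n → v (i + 1) ≤ (v i + v (i + 2)) / 2) (h₀ : v 0 ≤ 0) (hn : v n ≤ 0)
    {i : ℕ} (hi : i ≤ n) : v i ≤ 0 := by
  induction hi using Nat.decreasingInduction with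
  | self => exact hn
  | of_succ i hi ih =>
    have hprod : (i + 1) * v i ≤ 0 :=
      (succ_mul_le_mul_succ_of_le_average hv h₀ hi).trans
        (mul_nonpos_of_nonneg_of_nonpos i.cast_nonneg ih)
    exact nonpos_of_mul_nonpos_right hprod (by positivity)

end Convex

/-- Discrete-time subsolutions `u t i` of the midpoint dynamics on the path `0, …, n`. The path is
encoded in `ℕ`, so the values `u t i` with `n < i` are irrelevant. -/
def IsMidpointSubsolution (n : ℕ) (u : ℕ → ℕ → ℝ) : Prop :=
  ∀ t i, i + 2 ≤ n → u (t + 1) (i + 1) ≤ (u t i + u t (i + 2)) / 2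

namespace IsMidpointSubsolution

variable {n : ℕ} {u : ℕ → ℕ → ℝ}

theorem le_of_initial_le_of_boundary_le (hu : IsMidpointSubsolution n u) {C : ℝ}
    (hinit : ∀ i ≤ n, u 0 i ≤ C) (h₀ : ∀ t, u t 0 ≤ C) (hn : ∀ t, u t n ≤ C)
    (t : ℕ) {i : ℕ} (hi : i ≤ n) : u t i ≤ C := by
  induction t generalizing i with
  | zero => exact hinit i hi
  | succ t ih =>
    rcases i with _ | i
    · exact h₀ (t + 1)
    rcases hi.eq_or_lt with rfl | hlt
    · exact hn (t + 1)
    · linarith [hu t i hlt, ih (i := i) (by lia), ih (i := i + 2) hlt]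

theorem exists_forall_le (hu : IsMidpointSubsolution n u)
    (h₀ : BddAbove (Set.range (u · 0))) (hn : BddAbove (Set.range (u · n))) :
    ∃ C, ∀ t, ∀ i ≤ n, u t i ≤ C := by
  have hinit : BddAbove (u 0 '' Set.Iic n) := ((Set.finite_Iic n).image (u 0)).bddAbove
  obtain ⟨C, hC⟩ := (hinit.union h₀).union hn
  refine ⟨C, fun t i hi => hu.le_of_initial_le_of_boundary_le ?_ ?_ ?_ t hi⟩
  · exact fun j hj => hC (.inl (.inl ⟨j, hj, rfl⟩))
  · exact fun s => hC (.inl (.inr ⟨s, rfl⟩))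
  · exact fun s => hC (.inr ⟨s, rfl⟩)

theorem limsup_le_average (hu : IsMidpointSubsolution n u) {i : ℕ} (hi : i + 2 ≤ n)
    (hleft : IsBoundedUnder (· ≤ ·) atTop (u · i))
    (hright : IsBoundedUnder (· ≤ ·) atTop (u · (i + 2)))
    (hmid : IsCoboundedUnder (· ≤ ·) atTop (u · (i + 1))) :
    limsup (u · (i + 1)) atTop ≤
      (limsup (u · i) atTop + limsup (u · (i + 2)) atTop) / 2 := by
  refine le_of_forall_pos_le_add fun ε hε => limsup_le_of_le hmid ?_
  have hnext : ∀ᶠ t in atTop, u (t + 1) (i + 1) ≤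
      (limsup (u · i) atTop + limsup (u · (i + 2)) atTop) / 2 + ε := by
    filter_upwards [eventually_lt_of_limsup_lt (lt_add_of_pos_right _ hε) hleft,
      eventually_lt_of_limsup_lt (lt_add_of_pos_right _ hε) hright] with t htl htr
    linarith [hu t i hi]
  exact (map_add_atTop_eq_nat 1).ge hnext

theorem tendsto_zero (hu : IsMidpointSubsolution n u) (hnonneg : ∀ t, ∀ i ≤ n, 0 ≤ u t i)
    (h₀ : Tendsto (u · 0) atTop (𝓝 0)) (hn : Tendsto (u · n) atTop (𝓝 0))
    {i : ℕ} (hi : i ≤ n) : Tendsto (u · i) atTop (𝓝 0) := by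
  obtain ⟨C, hC⟩ := hu.exists_forall_le h₀.bddAbove_range hn.bddAbove_range
  have hle (j : ℕ) (hj : j ≤ n) : IsBoundedUnder (· ≤ ·) atTop (u · j) :=
    isBoundedUnder_of ⟨C, fun t => hC t j hj⟩
  have hge (j : ℕ) (hj : j ≤ n) : IsBoundedUnder (· ≥ ·) atTop (u · j) :=
    isBoundedUnder_of ⟨0, fun t => hnonneg t j hj⟩
  have hlimsup : limsup (u · i) atTop ≤ 0 :=
    nonpos_of_le_average (v := fun j => limsup (u · j) atTop)
      (fun j hj => hu.limsup_le_average hj (hle j (by lia)) (hle (j + 2) hj)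
        (hge (j + 1) (by lia)).isCoboundedUnder_le)
      h₀.limsup_eq.le hn.limsup_eq.le hi
  have hliminf : 0 ≤ liminf (u · i) atTop :=
    le_liminf_of_le (hle i hi).isCoboundedUnder_ge (.of_forall fun t => hnonneg t i hi)
  exact tendsto_of_le_liminf_of_limsup_le hliminf hlimsup (hle i hi) (hge i hi)

end IsMidpointSubsolution

theorem lineMap_succ_div_eq_midpoint {𝕜 V P : Type*} [Field 𝕜] [Invertible (2 : 𝕜)]
    [AddCommGroup V] [Module 𝕜 V] [AddTorsor V P] (a b : P) (c : 𝕜) (i : ℕ) :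
    AffineMap.lineMap a b (((i + 1 : ℕ) : 𝕜) / c) =
      midpoint 𝕜 (AffineMap.lineMap a b ((i : 𝕜) / c))
        (AffineMap.lineMap a b (((i + 2 : ℕ) : 𝕜) / c)) := by
  have hsub : (i : 𝕜) / c = ((i + 1 : ℕ) : 𝕜) / c - 1 / c := by push_cast; ring
  have hadd : ((i + 2 : ℕ) : 𝕜) / c = ((i + 1 : ℕ) : 𝕜) / c + 1 / c := by push_cast; ring
  rw [← AffineMap.map_midpoint, hsub, hadd, midpoint_sub_add]

section Affine

variable {V P : Type*} [SeminormedAddCommGroup V] [NormedSpace ℝ V] [PseudoMetricSpace P]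
  [NormedAddTorsor V P]

theorem isMidpointSubsolution_dist {n : ℕ} {x y : ℕ → ℕ → P}
    (hx : ∀ t i, i + 2 ≤ n → x (t + 1) (i + 1) = midpoint ℝ (x t i) (x t (i + 2)))
    (hy : ∀ t i, i + 2 ≤ n → y (t + 1) (i + 1) = midpoint ℝ (y t i) (y t (i + 2))) :
    IsMidpointSubsolution n fun t i => dist (x t i) (y t i) := by
  intro t i hi
  simpa [hx t i hi, hy t i hi] using
    dist_midpoint_midpoint_le' (𝕜 := ℝ) (x t i) (x t (i + 2)) (y t i) (y t (i + 2))

theorem spreading_with_moving_endpoints_general {n : ℕ} (hn : n ≠ 0) (x : ℕ → Fin (n + 1) → P)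
    (a b : P)
    (hupd : ∀ t i, ∀ h : i + 2 ≤ n,
      x (t + 1) ⟨i + 1, by lia⟩ = midpoint ℝ (x t ⟨i, by lia⟩) (x t ⟨i + 2, by lia⟩))
    (ha : Tendsto (x · 0) atTop (𝓝 a)) (hb : Tendsto (x · (Fin.last n)) atTop (𝓝 b))
    (i : Fin (n + 1)) :
    Tendsto (x · i) atTop (𝓝 (AffineMap.lineMap a b ((i : ℝ) / n))) := by
  have hindex {j : ℕ} (hj : j < n + 1) : Fin.ofNat (n + 1) j = ⟨j, hj⟩ :=
    Fin.ext (Nat.mod_eq_of_lt hj)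
  have hdist : IsMidpointSubsolution n fun t j =>
      dist (x t (Fin.ofNat (n + 1) j)) (AffineMap.lineMap a b ((j : ℝ) / n)) := by
    refine isMidpointSubsolution_dist (fun t j hj => ?_)
      fun _ j _ => lineMap_succ_div_eq_midpoint a b (n : ℝ) j
    rw [hindex (by lia), hindex (by lia), hindex (by lia), hupd t j hj]
  rw [tendsto_iff_dist_tendsto_zero]
  simpa using hdist.tendsto_zero (fun _ _ _ => dist_nonneg)
    (by simpa using tendsto_iff_dist_tendsto_zero.1 ha)
    (by simpa [hn] using tendsto_iff_dist_tendsto_zero.1 hb) i.is_le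

end Affine

/-- Spreading with convergent endpoints (generalized Cohen–Peleg):
interior points move to the midpoint of their index-neighbours, the two
extremal points converge to `a` and `b`; then every point converges to
the corresponding equidistant position between `a` and `b`. -/
theorem spreading_with_moving_endpoints
    (n : ℕ) (hn : 2 ≤ n) (x : ℕ → Fin (n + 1) → ℝ) (a b : ℝ)
    (hupd : ∀ t : ℕ, ∀ i : Fin (n + 1), ∀ _h1 : 1 ≤ (i : ℕ), ∀ _h2 : (i : ℕ) ≤ n - 1,
      x (t + 1) i =
        (x t ⟨(i : ℕ) - 1, by have := i.isLt; omega⟩ +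
         x t ⟨(i : ℕ) + 1, by have := i.isLt; omega⟩) / 2)
    (ha : Tendsto (fun t => x t 0) atTop (nhds a))
    (hb : Tendsto (fun t => x t (Fin.last n)) atTop (nhds b)) :
    ∀ i : Fin (n + 1),
      Tendsto (fun t => x t i) atTop
        (nhds (a + ((i : ℕ) : ℝ) / (n : ℝ) * (b - a))) := by
  intro i
  have h := spreading_with_moving_endpoints_general (by lia) x a b (fun t j hj => by
    simpa [midpoint_eq_smul_add, div_eq_inv_mul] using
      hupd t ⟨j + 1, by lia⟩ (Nat.le_add_left 1 j) (Nat.le_sub_of_add_le hj)) ha hb i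
  simpa [AffineMap.lineMap_apply, add_comm] using h
end

section
/- Let m ≥ 2 be an integer and let η : ℕ → Fin (m+1) → ℝ satisfy η (t+1) i = (η t (i−1) + η t (i+1))/2 for every t ≥ 0 and every 1 ≤ i ≤ m−1. Suppose that η t 0 → 0 and η t m → 0 as t → ∞, and that there exists a real M > 0 with |η t i| ≤ M for all t and all 0 ≤ i ≤ m. Then for every 0 ≤ i ≤ m, η t i → 0 as t → ∞. -/
open Filter Topology

/-!
Let `A` be a positive linear operator on real functions and `w > 0` a function with `A w < w` off
the boundary. On a finite set this improves to `A w ≤ q w` for some `q < 1`, so `(ε + K q ^ t) w`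
is a supersolution of `u (t + 1) ≤ A (u t)`: once `u ≤ ε w` on the boundary, comparison bounds the
upper limit of `u` by `ε w` everywhere. For averaging on the path `0, …, m` the concave parabola
`1 + i (m - i)` serves as `w`, since averaging lowers it by exactly `1`. The distance of a solution
of the averaging dynamics to the boundary limit is such a `u`, by the triangle inequality.
-/

section Comparison

variable {ι : Type*} {B : Set ι}

theorem le_of_boundary_le_of_le_monotone {α : Type*} [Preorder α] {A : (ι → α) → ι → α}
    (hA : Monotone A) {u v : ℕ → ι → α} (h_init : u 0 ≤ v 0)
    (h_boundary : ∀ t, ∀ i ∈ B, u t i ≤ v t i)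
    (hu : ∀ t, ∀ i ∉ B, u (t + 1) i ≤ A (u t) i)
    (hv : ∀ t, ∀ i ∉ B, A (v t) i ≤ v (t + 1) i) (t : ℕ) : u t ≤ v t := by
  induction t with
  | zero => exact h_init
  | succ t ih =>
    intro i
    by_cases hi : i ∈ B
    · exact h_boundary (t + 1) i hi
    · exact (hu t i hi).trans ((hA ih i).trans (hv t i hi))

variable {A : (ι → ℝ) →ₚ[ℝ] (ι → ℝ)} {w : ι → ℝ}

theorem le_add_mul_pow_mul_of_supersolution (hw : 0 ≤ w) {q : ℝ} (hq₀ : 0 ≤ q) (hq₁ : q ≤ 1)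
    (hAw : ∀ i ∉ B, A w i ≤ q * w i) {u : ℕ → ι → ℝ}
    (hu : ∀ t, ∀ i ∉ B, u (t + 1) i ≤ A (u t) i) {ε K : ℝ} (hε : 0 ≤ ε) (hK : 0 ≤ K)
    (h_boundary : ∀ t, ∀ i ∈ B, u t i ≤ ε * w i) (h_init : ∀ i, u 0 i ≤ K * w i)
    (t : ℕ) (i : ι) : u t i ≤ (ε + K * q ^ t) * w i := by
  refine le_of_boundary_le_of_le_monotone (A := A) (v := fun t ↦ (ε + K * q ^ t) • w)
    (OrderHomClass.mono A) (fun j ↦ ?_) (fun s j hj ↦ ?_) hu (fun s j hj ↦ ?_) t i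
  · calc u 0 j ≤ K * w j := h_init j
      _ ≤ (ε + K * q ^ 0) * w j :=
        mul_le_mul_of_nonneg_right (by rw [pow_zero]; linarith) (hw j)
  · exact (h_boundary s j hj).trans <|
      mul_le_mul_of_nonneg_right (le_add_of_nonneg_right (by positivity)) (hw j)
  · calc A ((ε + K * q ^ s) • w) j = (ε + K * q ^ s) * A w j := by
          rw [map_smul, Pi.smul_apply, smul_eq_mul]
      _ ≤ (ε + K * q ^ s) * (q * w j) :=
        mul_le_mul_of_nonneg_left (hAw j hj) (by positivity)
      _ = (ε * q + K * q ^ (s + 1)) * w j := by ring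
      _ ≤ (ε + K * q ^ (s + 1)) * w j :=
        mul_le_mul_of_nonneg_right (by gcongr; exact mul_le_of_le_one_right hε hq₁) (hw j)

theorem exists_lt_one_forall_le_mul_of_forall_lt {S : Set ι} (hS : S.Finite) {f g : ι → ℝ}
    (h : ∀ i ∈ S, f i < g i) : ∃ q : ℝ, 0 ≤ q ∧ q < 1 ∧ ∀ i ∈ S, f i ≤ q * g i := by
  have h_le : ∀ᶠ q : ℝ in 𝓝 1, ∀ i ∈ S, f i ≤ q * g i :=
    (eventually_all_finite hS).2 fun i hi ↦
      (tendsto_id.mul_const (g i)).eventually_const_le (by simpa only [one_mul] using h i hi)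
  have h_near : ∀ᶠ q : ℝ in 𝓝[<] 1, 0 ≤ q ∧ ∀ i ∈ S, f i ≤ q * g i :=
    eventually_nhdsWithin_of_eventually_nhds ((eventually_ge_nhds one_pos).and h_le)
  obtain ⟨q, ⟨hq₀, hq⟩, hq₁⟩ := (h_near.and eventually_mem_nhdsWithin).exists
  exact ⟨q, hq₀, hq₁, hq⟩

variable [Finite ι]

theorem exists_nonneg_forall_le_mul_of_pos (f : ι → ℝ) {g : ι → ℝ} (hg : ∀ i, 0 < g i) :
    ∃ K : ℝ, 0 ≤ K ∧ ∀ i, f i ≤ K * g i :=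
  ((eventually_ge_atTop 0).and <| eventually_all.2 fun i ↦
    (tendsto_id.atTop_mul_const (hg i)).eventually_ge_atTop (f i)).exists

theorem tendsto_zero_of_boundary_tendsto_zero_of_supersolution (hw : ∀ i, 0 < w i)
    (hAw : ∀ i ∉ B, A w i < w i) {u : ℕ → ι → ℝ} (hu_nonneg : ∀ t, 0 ≤ u t)
    (hu : ∀ t, ∀ i ∉ B, u (t + 1) i ≤ A (u t) i)
    (h_boundary : ∀ i ∈ B, Tendsto (u · i) atTop (𝓝 0)) (i : ι) :
    Tendsto (u · i) atTop (𝓝 0) := by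
  obtain ⟨q, hq₀, hq₁, hAq⟩ := exists_lt_one_forall_le_mul_of_forall_lt (Set.toFinite Bᶜ) hAw
  refine tendsto_order.2 ⟨fun a ha ↦ .of_forall fun t ↦ ha.trans_le (hu_nonneg t i),
    fun δ hδ ↦ ?_⟩
  obtain ⟨ε, hε, hεδ⟩ : ∃ ε > 0, ε * w i < δ :=
    ⟨δ / 2 / w i, div_pos (half_pos hδ) (hw i), by
      rw [div_mul_cancel₀ _ (hw i).ne']; exact half_lt_self hδ⟩
  obtain ⟨T, hT⟩ : ∃ T, ∀ t ≥ T, ∀ j ∈ B, u t j ≤ ε * w j :=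
    eventually_atTop.1 <| (eventually_all_finite B.toFinite).2 fun j hj ↦
      (h_boundary j hj).eventually_le_const (mul_pos hε (hw j))
  obtain ⟨K, hK, h_init⟩ := exists_nonneg_forall_le_mul_of_pos (u T) hw
  have h_bound (s : ℕ) : u (s + T) i ≤ (ε + K * q ^ s) * w i :=
    le_add_mul_pow_mul_of_supersolution (u := fun s ↦ u (s + T)) (fun j ↦ (hw j).le) hq₀ hq₁.le
      hAq (fun s ↦ by simpa only [Nat.add_right_comm] using hu (s + T)) hε.le hK
      (fun s ↦ hT (s + T) (Nat.le_add_left T s)) (by simpa only [Nat.zero_add] using h_init) s i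
  have h_lim : Tendsto (fun s : ℕ ↦ (ε + K * q ^ s) * w i) atTop (𝓝 (ε * w i)) := by
    simpa using
      (((tendsto_pow_atTop_nhds_zero_of_lt_one hq₀ hq₁).const_mul K).const_add ε).mul_const (w i)
  have h_shift : ∀ᶠ s in atTop, u (s + T) i < δ :=
    (h_lim.eventually_lt_const hεδ).mono fun s hs ↦ (h_bound s).trans_lt hs
  rwa [← map_add_atTop_eq_nat T, eventually_map]

end Comparison

section Path

variable {m : ℕ}

theorem one_le_val {i : Fin (m + 1)} (h₀ : i ≠ 0) : 1 ≤ (i : ℕ) :=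
  Nat.one_le_iff_ne_zero.2 (Fin.val_ne_zero_iff.2 h₀)

theorem val_le_sub_one {i : Fin (m + 1)} (hlast : i ≠ Fin.last m) : (i : ℕ) ≤ m - 1 :=
  Nat.le_sub_one_of_lt (Fin.val_lt_last hlast)

theorem mk_val_sub_one {i : Fin (m + 1)} (h₀ : i ≠ 0) :
    (⟨i - 1, (Nat.sub_le _ _).trans_lt i.isLt⟩ : Fin (m + 1)) = i - 1 :=
  Fin.ext (Fin.val_sub_one_of_ne_zero h₀).symm

theorem mk_val_add_one {i : Fin (m + 1)} (hlast : i ≠ Fin.last m) :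
    (⟨i + 1, Nat.succ_lt_succ (Fin.val_lt_last hlast)⟩ : Fin (m + 1)) = i + 1 :=
  Fin.ext (Fin.val_add_one_of_lt (Fin.lt_last_iff_ne_last.2 hlast)).symm

/-- The averaging operator `f ↦ (f (i - 1) + f (i + 1)) / 2` of the path `0, …, m`. Arithmetic in
`Fin (m + 1)` wraps around, so the values at the two endpoints carry no meaning. -/
noncomputable def neighborMean (m : ℕ) : (Fin (m + 1) → ℝ) →ₚ[ℝ] (Fin (m + 1) → ℝ) where
  toFun f i := (f (i - 1) + f (i + 1)) / 2
  map_add' f g := by ext i; simp only [Pi.add_apply]; ring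
  map_smul' c f := by ext i; simp only [Pi.smul_apply, smul_eq_mul, RingHom.id_apply]; ring
  monotone' f g h i := by
    have := h (i - 1)
    have := h (i + 1)
    dsimp only
    linarith

theorem neighborMean_apply (f : Fin (m + 1) → ℝ) (i : Fin (m + 1)) :
    neighborMean m f i = (f (i - 1) + f (i + 1)) / 2 := rfl

/-- The strictly concave function `i ↦ 1 + i (m - i)` on the path `0, …, m`, used to dominate
solutions of the averaging dynamics. -/
def parabola (m : ℕ) (i : Fin (m + 1)) : ℝ := 1 + i * (m - i)

theorem parabola_pos (i : Fin (m + 1)) : 0 < parabola m i := by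
  have hi : (i : ℝ) ≤ m := mod_cast i.is_le
  have := mul_nonneg (Nat.cast_nonneg (α := ℝ) i) (sub_nonneg.2 hi)
  unfold parabola
  linarith

theorem neighborMean_parabola {i : Fin (m + 1)} (h₀ : i ≠ 0) (hlast : i ≠ Fin.last m) :
    neighborMean m (parabola m) i = parabola m i - 1 := by
  have h_pred : (((i - 1 : Fin (m + 1)) : ℕ) : ℝ) = i - 1 := by
    rw [← mk_val_sub_one h₀, Nat.cast_pred (one_le_val h₀)]
  have h_succ : (((i + 1 : Fin (m + 1)) : ℕ) : ℝ) = i + 1 := by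
    rw [← mk_val_add_one hlast, Nat.cast_succ]
  rw [neighborMean_apply, parabola, parabola, parabola, h_pred, h_succ]
  ring

theorem averaging_boundary_to_zero_general {E P : Type*} [SeminormedAddCommGroup E]
    [NormedSpace ℝ E] [PseudoMetricSpace P] [NormedAddTorsor E P] {η : ℕ → Fin (m + 1) → P} {a : P}
    (hη : ∀ t i, i ≠ 0 → i ≠ Fin.last m →
      η (t + 1) i = midpoint ℝ (η t (i - 1)) (η t (i + 1)))
    (h₀ : Tendsto (η · 0) atTop (𝓝 a)) (hlast : Tendsto (η · (Fin.last m)) atTop (𝓝 a))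
    (i : Fin (m + 1)) : Tendsto (η · i) atTop (𝓝 a) := by
  have h_interior {j : Fin (m + 1)} (hj : j ∉ ({0, Fin.last m} : Set (Fin (m + 1)))) :
      j ≠ 0 ∧ j ≠ Fin.last m := by simpa using hj
  rw [tendsto_iff_dist_tendsto_zero] at h₀ hlast ⊢
  refine tendsto_zero_of_boundary_tendsto_zero_of_supersolution (A := neighborMean m)
    (B := {0, Fin.last m}) (u := fun t j ↦ dist (η t j) a) parabola_pos (fun j hj ↦ ?_)
    (fun t j ↦ dist_nonneg) (fun t j hj ↦ ?_) (by simp [h₀, hlast]) i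
  · rw [neighborMean_parabola (h_interior hj).1 (h_interior hj).2]
    exact sub_one_lt _
  · rw [hη t j (h_interior hj).1 (h_interior hj).2, neighborMean_apply]
    simpa only [midpoint_self, Real.norm_ofNat] using
      dist_midpoint_midpoint_le' (𝕜 := ℝ) (η t (j - 1)) (η t (j + 1)) a a

end Path

/-- Key convergence lemma (generalized Cohen–Peleg): averaging dynamics with
boundary values tending to `0` and uniformly bounded values converge to `0`
everywhere. -/
theorem averaging_boundary_to_zero
    (m : ℕ) (hm : 2 ≤ m) (η : ℕ → Fin (m + 1) → ℝ)
    (hupd : ∀ t : ℕ, ∀ i : Fin (m + 1), ∀ _h1 : 1 ≤ (i : ℕ), ∀ _h2 : (i : ℕ) ≤ m - 1,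
      η (t + 1) i =
        (η t ⟨(i : ℕ) - 1, by have := i.isLt; omega⟩ +
         η t ⟨(i : ℕ) + 1, by have := i.isLt; omega⟩) / 2)
    (h0 : Tendsto (fun t => η t 0) atTop (nhds 0))
    (hm' : Tendsto (fun t => η t (Fin.last m)) atTop (nhds 0))
    (M : ℝ) (hM : 0 < M)
    (hbd : ∀ t : ℕ, ∀ i : Fin (m + 1), |η t i| ≤ M) :
    ∀ i : Fin (m + 1), Tendsto (fun t => η t i) atTop (nhds 0) := by
  refine averaging_boundary_to_zero_general (fun t i hi₀ hi ↦ ?_) h0 hm'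
  rw [hupd t i (one_le_val hi₀) (val_le_sub_one hi), mk_val_sub_one hi₀, mk_val_add_one hi,
    midpoint_eq_smul_add, smul_eq_mul, invOf_eq_inv, div_eq_inv_mul]
end

section
/- Let j ≥ 1 be an integer and let s : ℕ → ℤ → ℝ satisfy: s t i ≥ 0 for all t and i; s t i = 0 whenever i ≤ 0 or i ≥ j+1; there exists a real C > 0 with s t i ≤ C for all t and i; and s (t+1) i ≤ (s t (i−1) + s t (i+1))/2 for every t ≥ 0 and every 1 ≤ i ≤ j. Then for every i, s t i → 0 as t → ∞. -/
open Filter Topology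

/-!
The functions `(t, i) ↦ c * cos θ ^ t * sin (i * θ)` are exact solutions of the averaging
recursion, and for `θ = π / (j + 1)` they vanish at both ends of the window and are positive inside
it. A large multiple of this solution therefore dominates `s` at time `0`, hence at all times by
the discrete comparison principle, and it decays geometrically because `|cos θ| < 1`.
-/

section Comparison

variable {K : Type*} [Field K] [LinearOrder K] [IsStrictOrderedRing K]

theorem le_of_le_average_of_average_le {a b : ℤ} {s u : ℕ → ℤ → K}
    (hs : ∀ t, ∀ i ∈ Set.Ioo a b, s (t + 1) i ≤ (s t (i - 1) + s t (i + 1)) / 2)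
    (hu : ∀ t, ∀ i ∈ Set.Ioo a b, (u t (i - 1) + u t (i + 1)) / 2 ≤ u (t + 1) i)
    (h_init : ∀ i ∈ Set.Ioo a b, s 0 i ≤ u 0 i)
    (h_left : ∀ t, s t a ≤ u t a) (h_right : ∀ t, s t b ≤ u t b)
    (t : ℕ) {i : ℤ} (hi : i ∈ Set.Icc a b) : s t i ≤ u t i := by
  induction t generalizing i with
  | zero =>
    obtain rfl | rfl | hi := Set.eq_endpoints_or_mem_Ioo_of_mem_Icc hi
    exacts [h_left 0, h_right 0, h_init i hi]
  | succ t ih =>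
    obtain rfl | rfl | hi := Set.eq_endpoints_or_mem_Ioo_of_mem_Icc hi
    · exact h_left (t + 1)
    · exact h_right (t + 1)
    · obtain ⟨hai, hib⟩ := hi
      have h_pred : s t (i - 1) ≤ u t (i - 1) := ih ⟨by lia, by lia⟩
      have h_succ : s t (i + 1) ≤ u t (i + 1) := ih ⟨by lia, by lia⟩
      calc s (t + 1) i ≤ (s t (i - 1) + s t (i + 1)) / 2 := hs t i ⟨hai, hib⟩
        _ ≤ (u t (i - 1) + u t (i + 1)) / 2 := by gcongr
        _ ≤ u (t + 1) i := hu t i ⟨hai, hib⟩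

theorem exists_forall_le_mul_of_finite {ι : Type*} {S : Set ι} (hS : S.Finite) (f : ι → K)
    {w : ι → K} (hw : ∀ i ∈ S, 0 < w i) : ∃ c, ∀ i ∈ S, f i ≤ c * w i := by
  obtain ⟨c, hc⟩ := (hS.image fun i => f i / w i).bddAbove
  exact ⟨c, fun i hi => (div_le_iff₀ (hw i hi)).1 (hc (Set.mem_image_of_mem _ hi))⟩

end Comparison

theorem sin_sub_one_mul_add_sin_add_one_mul (x θ : ℝ) :
    Real.sin ((x - 1) * θ) + Real.sin ((x + 1) * θ) = 2 * Real.cos θ * Real.sin (x * θ) := by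
  rw [sub_one_mul, add_one_mul, Real.sin_sub, Real.sin_add]
  ring

theorem sin_mul_pi_div_pos {x y : ℝ} (hx : 0 < x) (hxy : x < y) :
    0 < Real.sin (x * (Real.pi / y)) := by
  have hy : 0 < y := hx.trans hxy
  refine Real.sin_pos_of_pos_of_lt_pi (by positivity) ?_
  calc x * (Real.pi / y) < y * (Real.pi / y) := by gcongr
    _ = Real.pi := mul_div_cancel₀ Real.pi hy.ne'

theorem abs_cos_lt_one_of_sin_ne_zero {θ : ℝ} (h_sin : Real.sin θ ≠ 0) : |Real.cos θ| < 1 := by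
  rw [← sq_lt_one_iff_abs_lt_one, Real.cos_sq']
  exact sub_lt_self 1 (sq_pos_of_ne_zero h_sin)

theorem exists_le_mul_cos_pow_mul_sin {n : ℤ} (hn : n ≠ 0) {s : ℕ → ℤ → ℝ}
    (hs : ∀ t, ∀ i ∈ Set.Ioo 0 n, s (t + 1) i ≤ (s t (i - 1) + s t (i + 1)) / 2)
    (h_left : ∀ t, s t 0 ≤ 0) (h_right : ∀ t, s t n ≤ 0) :
    ∃ c, ∀ t, ∀ i ∈ Set.Icc 0 n,
      s t i ≤ c * Real.cos (Real.pi / n) ^ t * Real.sin (i * (Real.pi / n)) := by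
  have h_sin_pos : ∀ i ∈ Set.Ioo 0 n, 0 < Real.sin (i * (Real.pi / n)) := fun i hi =>
    sin_mul_pi_div_pos (by exact_mod_cast hi.1) (by exact_mod_cast hi.2)
  have h_sin_right : Real.sin (n * (Real.pi / n)) = 0 := by
    rw [mul_div_cancel₀ Real.pi (Int.cast_ne_zero.2 hn), Real.sin_pi]
  obtain ⟨c, hc⟩ := exists_forall_le_mul_of_finite (Set.finite_Ioo 0 n) (s 0) h_sin_pos
  refine ⟨c, fun t i hi => le_of_le_average_of_average_le
    (u := fun t i => c * Real.cos (Real.pi / n) ^ t * Real.sin (i * (Real.pi / n)))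
    hs (fun t i _ => le_of_eq ?_) (by simpa using hc) (by simpa using h_left)
    (by simpa [h_sin_right] using h_right) t hi⟩
  push_cast
  rw [← mul_add, sin_sub_one_mul_add_sin_add_one_mul]
  ring

/-- A nonnegative, uniformly bounded double sequence vanishing outside the
window `1 ≤ i ≤ j` and sub-harmonic in time tends to `0` everywhere. -/
theorem subharmonic_window_to_zero
    (j : ℕ) (hj : 1 ≤ j) (s : ℕ → ℤ → ℝ)
    (hnonneg : ∀ t : ℕ, ∀ i : ℤ, 0 ≤ s t i)
    (hzero : ∀ t : ℕ, ∀ i : ℤ, (i ≤ 0 ∨ (j : ℤ) + 1 ≤ i) → s t i = 0)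
    (C : ℝ) (hC : 0 < C)
    (hbd : ∀ t : ℕ, ∀ i : ℤ, s t i ≤ C)
    (hupd : ∀ t : ℕ, ∀ i : ℤ, 1 ≤ i → i ≤ (j : ℤ) →
      s (t + 1) i ≤ (s t (i - 1) + s t (i + 1)) / 2) :
    ∀ i : ℤ, Tendsto (fun t => s t i) atTop (nhds 0) := by
  intro i
  by_cases hi : i ≤ 0 ∨ (j : ℤ) + 1 ≤ i
  · simp only [hzero _ i hi, tendsto_const_nhds]
  obtain ⟨c, hc⟩ := exists_le_mul_cos_pow_mul_sin (n := j + 1) (by lia)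
    (fun t i hi => hupd t i (by grind) (by grind))
    (fun t => (hzero t 0 (.inl le_rfl)).le) (fun t => (hzero t _ (.inr le_rfl)).le)
  have h_one_lt : (1 : ℝ) < ((j + 1 : ℤ) : ℝ) := by exact_mod_cast (by lia : (1 : ℤ) < j + 1)
  have h_cos : |Real.cos (Real.pi / (j + 1 : ℤ))| < 1 :=
    abs_cos_lt_one_of_sin_ne_zero (by simpa only [one_mul] using
      (sin_mul_pi_div_pos one_pos h_one_lt).ne')
  have h_bound_tendsto := ((tendsto_pow_atTop_nhds_zero_of_abs_lt_one h_cos).const_mul c).mul_const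
    (Real.sin (i * (Real.pi / (j + 1 : ℤ))))
  rw [mul_zero, zero_mul] at h_bound_tendsto
  exact squeeze_zero (fun t => hnonneg t i) (fun t => hc t i ⟨by lia, by lia⟩) h_bound_tendsto
end

section
/- Let j ≥ 1 be an integer and let s : ℕ → ℤ → ℝ satisfy: s t i ≥ 0 for all t and i; s t i = 0 whenever i ≤ 0 or i ≥ j+1; and s (t+1) i ≤ (s t (i−1) + s t (i+1))/2 for every t ≥ 0 and every 1 ≤ i ≤ j. Then for every t ≥ 0 and every i ∈ ℤ, s t i ≤ (1/2^t) · Σ_{k=0}^{t} C(t,k) · s 0 (i − t + 2k), where C(t,k) denotes the binomial coefficient. -/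
open Filter Topology

/-!
Let `T` be the operator averaging the two neighbours of each site. It is half the sum of the two
unit translations, which commute, so the binomial theorem expands `T ^ t`. Since `T` is monotone,
iterating `s (t + 1) ≤ T (s t)` yields `s t ≤ T ^ t (s 0)`. The window is harmless: outside it the
left-hand side is `0` and the right-hand side is nonnegative.
-/

section Operators

variable {R G : Type*} [CommSemiring R] [AddCommMonoid G]

/-- Translation by `a` on functions, as an algebra element so that the binomial theorem applies
to it. The sign is chosen so that `G` need only be a monoid: `f` is sent to `x ↦ f (x + a)`. -/
def translation (R : Type*) {G : Type*} [CommSemiring R] [AddCommMonoid G] (a : G) :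
    Module.End R (G → R) :=
  LinearMap.funLeft R R (· + a)

theorem translation_apply (a : G) (f : G → R) (x : G) : translation R a f x = f (x + a) :=
  rfl

theorem translation_mul (a b : G) :
    translation R a * translation R b = translation R (a + b) := by
  ext1 f
  funext x
  simp only [Module.End.mul_apply, translation_apply, add_assoc]

theorem translation_pow (a : G) (n : ℕ) : translation R a ^ n = translation R (n • a) := by
  induction n with
  | zero =>
    ext1 f
    funext x
    simp only [pow_zero, Module.End.one_apply, translation_apply, zero_smul, add_zero]
  | succ n ih => rw [pow_succ, ih, translation_mul, succ_nsmul]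

theorem translation_commute (a b : G) : Commute (translation R a) (translation R b) := by
  rw [commute_iff_eq, translation_mul, translation_mul, add_comm]

/-- The weighted two-neighbour operator `f ↦ (x ↦ p * f (x + a) + q * f (x + b))`; for `p + q = 1`
it is the transition operator of the random walk with steps `a` and `b`. -/
def walkOperator (p q : R) (a b : G) : Module.End R (G → R) :=
  p • translation R a + q • translation R b

theorem walkOperator_apply (p q : R) (a b : G) (f : G → R) (x : G) :
    walkOperator p q a b f x = p * f (x + a) + q * f (x + b) :=
  rfl

theorem walkOperator_pow_apply (p q : R) (a b : G) (n : ℕ) (f : G → R) (x : G) :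
    (walkOperator p q a b ^ n) f x =
      ∑ k ∈ Finset.range (n + 1),
        p ^ k * q ^ (n - k) * n.choose k * f (x + (k • a + (n - k) • b)) := by
  have hcomm : Commute (p • translation R a) (q • translation R b) :=
    ((translation_commute a b).smul_left p).smul_right q
  rw [walkOperator, hcomm.add_pow, LinearMap.sum_apply, Finset.sum_apply]
  refine Finset.sum_congr rfl fun k _ ↦ ?_
  rw [smul_pow, smul_pow, translation_pow, translation_pow, smul_mul_smul_comm, translation_mul,
    ← nsmul_eq_mul', LinearMap.smul_apply, LinearMap.smul_apply, Pi.smul_apply, Pi.smul_apply,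
    translation_apply, nsmul_eq_mul, smul_eq_mul]
  ring

variable [PartialOrder R] [IsOrderedRing R]

theorem walkOperator_monotone {p q : R} (hp : 0 ≤ p) (hq : 0 ≤ q) (a b : G) :
    Monotone (walkOperator p q a b) := by
  intro f g hfg x
  simp only [walkOperator_apply]
  gcongr <;> exact hfg _

theorem le_walkOperator_pow {p q : R} (hp : 0 ≤ p) (hq : 0 ≤ q) {a b : G} {s : ℕ → G → R}
    (hs : ∀ t, s (t + 1) ≤ walkOperator p q a b (s t)) (t : ℕ) :
    s t ≤ (walkOperator p q a b ^ t) (s 0) := by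
  refine (walkOperator_monotone hp hq a b).seq_le_seq
    (y := fun n ↦ (walkOperator p q a b ^ n) (s 0)) t le_rfl (fun n _ ↦ hs n) fun n _ ↦ ?_
  rw [pow_succ', Module.End.mul_apply]

end Operators

section NeighbourAverage

variable {K : Type*} [Field K]

theorem walkOperator_half_apply (f : ℤ → K) (i : ℤ) :
    walkOperator (1 / 2) (1 / 2) 1 (-1) f i = (f (i - 1) + f (i + 1)) / 2 := by
  rw [walkOperator_apply, ← sub_eq_add_neg]
  ring

theorem walkOperator_half_pow_apply (t : ℕ) (f : ℤ → K) (i : ℤ) :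
    (walkOperator (1 / 2) (1 / 2) 1 (-1) ^ t) f i =
      (1 / 2 ^ t) * ∑ k ∈ Finset.range (t + 1), (t.choose k : K) * f (i - t + 2 * k) := by
  rw [walkOperator_pow_apply, Finset.mul_sum]
  refine Finset.sum_congr rfl fun k hk ↦ ?_
  have hkt : k ≤ t := Finset.mem_range_succ_iff.mp hk
  have hsite : i + (k • 1 + (t - k) • (-1)) = i - t + 2 * k := by
    simp only [nsmul_eq_mul, Nat.cast_sub hkt]
    ring
  rw [hsite, pow_mul_pow_sub _ hkt, one_div_pow, mul_assoc]

variable [LinearOrder K] [IsStrictOrderedRing K]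

theorem subharmonic_binomial_bound_general {s : ℕ → ℤ → K}
    (hs : ∀ t i, s (t + 1) i ≤ (s t (i - 1) + s t (i + 1)) / 2) (t : ℕ) (i : ℤ) :
    s t i ≤ (1 / 2 ^ t) *
      ∑ k ∈ Finset.range (t + 1), (t.choose k : K) * s 0 (i - t + 2 * k) := by
  rw [← walkOperator_half_pow_apply]
  refine le_walkOperator_pow one_half_pos.le one_half_pos.le (fun n x ↦ ?_) t i
  rw [walkOperator_half_apply]
  exact hs n x

theorem le_average_of_nonpos_of_notMem {W : Set ℤ} {f g : ℤ → K} (hf : ∀ i, 0 ≤ f i)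
    (hg : ∀ i ∉ W, g i ≤ 0) (hW : ∀ i ∈ W, g i ≤ (f (i - 1) + f (i + 1)) / 2) (i : ℤ) :
    g i ≤ (f (i - 1) + f (i + 1)) / 2 := by
  by_cases hi : i ∈ W
  · exact hW i hi
  · exact (hg i hi).trans (div_nonneg (add_nonneg (hf _) (hf _)) zero_le_two)

end NeighbourAverage

/-- Binomial smoothing bound for a nonnegative double sequence vanishing
outside the window `1 ≤ i ≤ j` and sub-harmonic in time. -/
theorem subharmonic_binomial_bound
    (j : ℕ) (hj : 1 ≤ j) (s : ℕ → ℤ → ℝ)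
    (hnonneg : ∀ t : ℕ, ∀ i : ℤ, 0 ≤ s t i)
    (hzero : ∀ t : ℕ, ∀ i : ℤ, (i ≤ 0 ∨ (j : ℤ) + 1 ≤ i) → s t i = 0)
    (hupd : ∀ t : ℕ, ∀ i : ℤ, 1 ≤ i → i ≤ (j : ℤ) →
      s (t + 1) i ≤ (s t (i - 1) + s t (i + 1)) / 2) :
    ∀ t : ℕ, ∀ i : ℤ,
      s t i ≤ (1 / 2 ^ t) *
        ∑ k ∈ Finset.range (t + 1),
          (Nat.choose t k : ℝ) * s 0 (i - (t : ℤ) + 2 * (k : ℤ)) :=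
  subharmonic_binomial_bound_general fun t ↦
    le_average_of_nonpos_of_notMem (W := Set.Icc 1 (j : ℤ)) (hnonneg t)
      (fun i hi ↦ (hzero (t + 1) i (by grind)).le) fun i hi ↦ hupd t i hi.1 hi.2
end

section
/- (No Crossing) In the robot model on a line, if i and j are non-faulty robots (i ≠ 0, i ≠ n, j ≠ 0, j ≠ n) and x t i < x t j at some time t, then x (t+1) i ≤ x (t+1) j. -/
open Filter Topology

/-- Position of the farthest left robot visible from robot `i` at time `t`
(visibility radius `V`). -/
noncomputable def lpos {n : ℕ} (V : ℝ) (x : ℕ → Fin (n + 1) → ℝ)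
    (t : ℕ) (i : Fin (n + 1)) : ℝ :=
  sInf (x t '' {j | |x t j - x t i| ≤ V})

/-- Position of the farthest right robot visible from robot `i` at time `t`
(visibility radius `V`). -/
noncomputable def rpos {n : ℕ} (V : ℝ) (x : ℕ → Fin (n + 1) → ℝ)
    (t : ℕ) (i : Fin (n + 1)) : ℝ :=
  sSup (x t '' {j | |x t j - x t i| ≤ V})

/-!
The leftmost robot visible from position `a` is the leftmost of all robots in `[a - V, ∞)`: the
right end of the visibility window does not affect the infimum, because the window contains the
robot at `a` itself. Moving `a` to the right shrinks this half-line, so the infimum increases; the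
supremum does so symmetrically, and hence so does their average.
-/

section Window

variable {α : Type*} [ConditionallyCompleteLinearOrder α] {s : Set α} {a b : α}

theorem csInf_inter_Icc_eq_csInf_inter_Ici (h : (s ∩ Set.Icc a b).Nonempty) :
    sInf (s ∩ Set.Icc a b) = sInf (s ∩ Set.Ici a) := by
  obtain ⟨c, hcs, hac, hcb⟩ := h
  refine csInf_eq_csInf_of_forall_exists_le (fun y hy ↦ ⟨y, ⟨hy.1, hy.2.1⟩, le_rfl⟩) ?_
  rintro y ⟨hys, hay⟩
  rcases le_total y b with hyb | hby
  · exact ⟨y, ⟨hys, hay, hyb⟩, le_rfl⟩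
  · exact ⟨c, ⟨hcs, hac, hcb⟩, hcb.trans hby⟩

theorem csSup_inter_Icc_eq_csSup_inter_Iic (h : (s ∩ Set.Icc a b).Nonempty) :
    sSup (s ∩ Set.Icc a b) = sSup (s ∩ Set.Iic b) := by
  obtain ⟨c, hcs, hac, hcb⟩ := h
  refine csSup_eq_csSup_of_forall_exists_le (fun y hy ↦ ⟨y, ⟨hy.1, hy.2.2⟩, le_rfl⟩) ?_
  rintro y ⟨hys, hyb⟩
  rcases le_total a y with hay | hya
  · exact ⟨y, ⟨hys, hay, hyb⟩, le_rfl⟩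
  · exact ⟨c, ⟨hcs, hac, hcb⟩, hya.trans hac⟩

end Window

section Robots

variable {ι : Type*} {V : ℝ} {p : ι → ℝ} {i j : ι}

/-- The positions of the robots visible from robot `i` with visibility radius `V`, in the
configuration `p` of an arbitrary family of robots. -/
def visiblePositions (V : ℝ) (p : ι → ℝ) (i : ι) : Set ℝ :=
  p '' {j | |p j - p i| ≤ V}

/-- The point to which the update rule sends robot `i` in the configuration `p`, namely the
midpoint of its extreme visible positions. -/
noncomputable def moveTarget (V : ℝ) (p : ι → ℝ) (i : ι) : ℝ :=
  (sInf (visiblePositions V p i) + sSup (visiblePositions V p i)) / 2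

theorem visiblePositions_eq_range_inter_Icc :
    visiblePositions V p i = Set.range p ∩ Set.Icc (p i - V) (p i + V) := by
  rw [← Real.closedBall_eq_Icc, Set.inter_comm, ← Set.image_preimage_eq_inter_range]
  rfl

theorem self_mem_visiblePositions (hV : 0 ≤ V) : p i ∈ visiblePositions V p i :=
  ⟨i, by simpa using hV, rfl⟩

theorem sInf_visiblePositions (hV : 0 ≤ V) :
    sInf (visiblePositions V p i) = sInf (Set.range p ∩ Set.Ici (p i - V)) := by
  have hne := Set.nonempty_of_mem (self_mem_visiblePositions (p := p) (i := i) hV)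
  rw [visiblePositions_eq_range_inter_Icc] at hne ⊢
  exact csInf_inter_Icc_eq_csInf_inter_Ici hne

theorem sSup_visiblePositions (hV : 0 ≤ V) :
    sSup (visiblePositions V p i) = sSup (Set.range p ∩ Set.Iic (p i + V)) := by
  have hne := Set.nonempty_of_mem (self_mem_visiblePositions (p := p) (i := i) hV)
  rw [visiblePositions_eq_range_inter_Icc] at hne ⊢
  exact csSup_inter_Icc_eq_csSup_inter_Iic hne

theorem sInf_visiblePositions_mono (hV : 0 ≤ V) (hij : p i ≤ p j) :
    sInf (visiblePositions V p i) ≤ sInf (visiblePositions V p j) := by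
  rw [sInf_visiblePositions hV, sInf_visiblePositions hV]
  have hj : p j ∈ Set.Ici (p j - V) := sub_le_self _ hV
  exact csInf_le_csInf (bddBelow_Ici.mono Set.inter_subset_right) ⟨p j, ⟨j, rfl⟩, hj⟩
    (Set.inter_subset_inter_right _ (Set.Ici_subset_Ici.2 (by gcongr)))

theorem sSup_visiblePositions_mono (hV : 0 ≤ V) (hij : p i ≤ p j) :
    sSup (visiblePositions V p i) ≤ sSup (visiblePositions V p j) := by
  rw [sSup_visiblePositions hV, sSup_visiblePositions hV]
  have hi : p i ∈ Set.Iic (p i + V) := le_add_of_nonneg_right hV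
  exact csSup_le_csSup (bddAbove_Iic.mono Set.inter_subset_right) ⟨p i, ⟨i, rfl⟩, hi⟩
    (Set.inter_subset_inter_right _ (Set.Iic_subset_Iic.2 (by gcongr)))

theorem moveTarget_mono (hV : 0 ≤ V) (hij : p i ≤ p j) :
    moveTarget V p i ≤ moveTarget V p j := by
  unfold moveTarget
  gcongr ?_ / 2
  exact add_le_add (sInf_visiblePositions_mono hV hij) (sSup_visiblePositions_mono hV hij)

theorem no_crossing_general (hV : 0 ≤ V) {x : ℕ → ι → ℝ} {A : Set ι}
    (hupd : ∀ t, ∀ k ∈ A, x (t + 1) k = moveTarget V (x t) k)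
    (hi : i ∈ A) (hj : j ∈ A) {t : ℕ} (hij : x t i ≤ x t j) :
    x (t + 1) i ≤ x (t + 1) j := by
  rw [hupd t i hi, hupd t j hj]
  exact moveTarget_mono hV hij

end Robots

/-- (No Crossing) Two non-faulty robots never cross in one step. -/
theorem no_crossing
    (n : ℕ) (hn : 2 ≤ n) (V D : ℝ) (hV : 0 < V) (hD : 0 < D)
    (x : ℕ → Fin (n + 1) → ℝ)
    (hfault0 : ∀ t : ℕ, x t 0 = 0)
    (hfaultn : ∀ t : ℕ, x t (Fin.last n) = D)
    (hupd : ∀ t : ℕ, ∀ i : Fin (n + 1), i ≠ 0 → i ≠ Fin.last n →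
      x (t + 1) i = (lpos V x t i + rpos V x t i) / 2)
    (i j : Fin (n + 1)) (hi0 : i ≠ 0) (hin : i ≠ Fin.last n)
    (hj0 : j ≠ 0) (hjn : j ≠ Fin.last n)
    (t : ℕ) (hlt : x t i < x t j) :
    x (t + 1) i ≤ x (t + 1) j := by
  have hupd' : ∀ t, ∀ k ∈ {k : Fin (n + 1) | k ≠ 0 ∧ k ≠ Fin.last n},
      x (t + 1) k = moveTarget V (x t) k := fun t k hk ↦ hupd t k hk.1 hk.2
  exact no_crossing_general hV.le hupd' ⟨hi0, hin⟩ ⟨hj0, hjn⟩ hlt.le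
end

section
/- In the robot model on a line, let ℓ be a non-faulty robot that is leftmost among non-faulty robots at time t₀, i.e., x t₀ ℓ ≤ x t₀ i for every non-faulty robot i. If 0 ≤ x t₀ ℓ ≤ D, then x t ℓ ≥ 0 for every t ≥ t₀; that is, once the leftmost non-faulty robot is inside the segment [0,D] delimited by the two faulty robots, it never again moves to the left of 0. -/
open Filter Topology

/-! A lower bound for all positions bounds both extremes that a robot sees, hence their midpoint,
so a half-line `[c, ∞)` that contains all robots keeps them. That `ℓ` is leftmost matters only at
time `t₀`, where it places every robot in `[0, ∞)`. -/

section HalfLine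

variable {n : ℕ} {V c : ℝ} {x : ℕ → Fin (n + 1) → ℝ} {t : ℕ} {i : Fin (n + 1)}

theorem le_lpos (hV : 0 ≤ V) (hc : ∀ j, |x t j - x t i| ≤ V → c ≤ x t j) :
    c ≤ lpos V x t i := by
  have self_visible : |x t i - x t i| ≤ V := by simpa only [sub_self, abs_zero] using hV
  exact le_csInf ⟨x t i, i, self_visible, rfl⟩ (Set.forall_mem_image.mpr hc)

theorem lpos_le_rpos : lpos V x t i ≤ rpos V x t i :=
  have finite_positions := (Set.toFinite {j | |x t j - x t i| ≤ V}).image (x t)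
  Real.sInf_le_sSup _ finite_positions.bddBelow finite_positions.bddAbove

theorem le_midpoint_lpos_rpos (hV : 0 ≤ V) (hc : ∀ j, |x t j - x t i| ≤ V → c ≤ x t j) :
    c ≤ (lpos V x t i + rpos V x t i) / 2 := by
  linarith [le_lpos hV hc, lpos_le_rpos (V := V) (x := x) (t := t) (i := i)]

theorem leftmost_stays_right_of_zero_general {F : Set (Fin (n + 1))} {t₀ : ℕ} (hV : 0 ≤ V)
    (hfault : ∀ t, t₀ ≤ t → ∀ i ∈ F, c ≤ x t i)
    (hupd : ∀ t, t₀ ≤ t → ∀ i ∉ F, x (t + 1) i = (lpos V x t i + rpos V x t i) / 2)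
    (hinit : ∀ i ∉ F, c ≤ x t₀ i) :
    ∀ t, t₀ ≤ t → ∀ i, c ≤ x t i := by
  intro t ht
  induction t, ht using Nat.le_induction with
  | base =>
    intro i
    by_cases hi : i ∈ F
    · exact hfault t₀ le_rfl i hi
    · exact hinit i hi
  | succ t ht ih =>
    intro i
    by_cases hi : i ∈ F
    · exact hfault (t + 1) (Nat.le_succ_of_le ht) i hi
    · rw [hupd t ht i hi]
      exact le_midpoint_lpos_rpos hV fun j _ => ih j

end HalfLine

/-- Once the leftmost non-faulty robot is inside the segment `[0, D]`, it
never again moves to the left of `0`. -/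
theorem leftmost_stays_right_of_zero
    (n : ℕ) (hn : 2 ≤ n) (V D : ℝ) (hV : 0 < V) (hD : 0 < D)
    (x : ℕ → Fin (n + 1) → ℝ)
    (hfault0 : ∀ t : ℕ, x t 0 = 0)
    (hfaultn : ∀ t : ℕ, x t (Fin.last n) = D)
    (hupd : ∀ t : ℕ, ∀ i : Fin (n + 1), i ≠ 0 → i ≠ Fin.last n →
      x (t + 1) i = (lpos V x t i + rpos V x t i) / 2)
    (ℓ : Fin (n + 1)) (hℓ0 : ℓ ≠ 0) (hℓn : ℓ ≠ Fin.last n) (t₀ : ℕ)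
    (hleftmost : ∀ i : Fin (n + 1), i ≠ 0 → i ≠ Fin.last n → x t₀ ℓ ≤ x t₀ i)
    (hin : 0 ≤ x t₀ ℓ ∧ x t₀ ℓ ≤ D) :
    ∀ t : ℕ, t₀ ≤ t → 0 ≤ x t ℓ := by
  intro t ht
  exact leftmost_stays_right_of_zero_general (F := {0, Fin.last n}) hV.le
    (by simp [hfault0, hfaultn, hD.le]) (by simpa using fun t _ => hupd t)
    (by simpa using fun i hi₀ hiₙ => hin.1.trans (hleftmost i hi₀ hiₙ)) t ht ℓ
end

section
/- (Existence of a Size-Stable Time) In the robot model on a line, assume the visibility graph at time 0 is connected. Then there exists a time t₀ such that for all t ≥ t₀ and all robots i, j: (i) |x t i − x t j| ≤ V if and only if |x t₀ i − x t₀ j| ≤ V (the visibility relation no longer changes); (ii) if i and j are both non-faulty then x t i ≤ x t j if and only if x t₀ i ≤ x t₀ j (no more crossings or mergings among non-faulty robots); and (iii) for every non-faulty i, (x t i < 0 ↔ x t₀ i < 0) and (x t i > D ↔ x t₀ i > D) (no more crossings of the faulty robots). -/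
open Filter Topology

/-!
The new position of a robot lies within `V / 2` of the midpoint between its old position and that of
any robot it sees, so two robots that see each other keep doing so. The order of two non-faulty
robots is preserved because the farthest positions they see are ordered in the same way. Both
relations are therefore monotone in time and eventually constant.

By reflection, crossings need only be excluded at a level `c` to the left of all faulty robots.
Consider the robots linked to a given robot `i` by a chain of visibility, over all times. Either at
some time they all are on the right of `c`, and then they stay there, or the leftmost non-faulty one
among them, `a`, remains below `c` forever. In the latter case `a` is the leftmost robot of the
chain component and moves monotonically to a limit `P ≤ c`. Whatever a non-faulty robot converging
to `P` sees also converges to `P`: what it sees on the right is balanced by what it sees on the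
left, which is squeezed between `a` and `P`. If `i` converges to `P`, then `i` and `a` eventually
see exactly the same robots, hence coincide and `i` stays below `c`. If it does not, then some
faulty robot must interrupt the chain from `a` to `i`, so that `P = c`, and `i`, which `a` never
sees, is eventually on the right of `c`.
-/

theorem eventuallyConst_of_monotone {α : Type*} [Preorder α] {p : α → Prop} (hp : Monotone p) :
    EventuallyConst p atTop := by
  rw [eventuallyConst_pred]
  by_cases h : ∃ s, p s
  · obtain ⟨s, hs⟩ := h
    exact Or.inl ((eventually_ge_atTop s).mono fun t hst => hp hst hs)
  · exact Or.inr (Eventually.of_forall (not_exists.1 h))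

theorem eventuallyConst_pi {α κ : Type*} {β : κ → Type*} [Finite κ] [∀ k, Nonempty (β k)]
    {l : Filter α} {f : α → ∀ k, β k} (hf : ∀ k, EventuallyConst (fun t => f t k) l) :
    EventuallyConst f l := by
  choose c hc using fun k => (hf k).eventuallyEq_const
  exact eventuallyConst_iff_exists_eventuallyEq.2
    ⟨c, (eventually_all.2 hc).mono fun _ h => funext h⟩

variable {ι : Type*} {V : ℝ}

/-- The set of robots visible from robot `i` in the configuration `y`, for the visibility
radius `V`. -/
def visible (V : ℝ) (y : ι → ℝ) (i : ι) : Set ι :=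
  {j | |y j - y i| ≤ V}

/-- In the configuration `y`, the point `z` is the target of robot `i`: the midpoint of the
positions of the farthest robots `p` and `q` that `i` sees on its left and on its right. Naming `p`
and `q` makes sense for infinitely many robots as well, without reference to an infimum. -/
def IsTarget (V : ℝ) (y : ι → ℝ) (i : ι) (z : ℝ) : Prop :=
  ∃ p ∈ visible V y i, ∃ q ∈ visible V y i,
    IsMinOn y (visible V y i) p ∧ IsMaxOn y (visible V y i) q ∧ z = (y p + y q) / 2

section Configuration

variable {y : ι → ℝ} {i j : ι} {z w : ℝ}

theorem mem_visible : j ∈ visible V y i ↔ |y j - y i| ≤ V :=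
  Iff.rfl

theorem mem_visible_comm : i ∈ visible V y j ↔ j ∈ visible V y i := by
  simp only [mem_visible, abs_sub_comm]

theorem self_mem_visible (hV : 0 ≤ V) : i ∈ visible V y i := by
  simpa [mem_visible] using hV

theorem visible_neg : visible V (fun k => -y k) i = visible V y i := by
  ext j
  rw [mem_visible_comm]
  simp only [mem_visible, neg_sub_neg]

theorem IsTarget.radius_nonneg (hz : IsTarget V y i z) : 0 ≤ V := by
  obtain ⟨p, hp, -⟩ := hz
  exact (abs_nonneg _).trans hp

theorem IsTarget.neg (hz : IsTarget V y i z) : IsTarget V (fun k => -y k) i (-z) := by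
  obtain ⟨p, hp, q, hq, hmin, hmax, rfl⟩ := hz
  refine ⟨q, ?_, p, ?_, ?_, ?_, by ring⟩ <;> rw [visible_neg]
  exacts [hq, hp, hmax.neg, hmin.neg]

theorem IsTarget.mono (hz : IsTarget V y i z) (hw : IsTarget V y j w) (hij : y i ≤ y j) :
    z ≤ w := by
  have hi := self_mem_visible (y := y) (i := i) hz.radius_nonneg
  have hj := self_mem_visible (y := y) (i := j) hz.radius_nonneg
  obtain ⟨p, -, q, hq, hpmin, -, rfl⟩ := hz
  obtain ⟨p', hp', q', -, -, hqmax', rfl⟩ := hw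
  -- What `j` sees and `i` does not lies on the right of everything `i` sees, and symmetrically.
  have hleft : y p ≤ y p' := by
    by_cases h : p' ∈ visible V y i
    · exact hpmin h
    · have : y p ≤ y i := hpmin hi
      simp only [mem_visible, abs_le] at h hp'
      grind
  have hright : y q ≤ y q' := by
    by_cases h : q ∈ visible V y j
    · exact hqmax' h
    · have : y j ≤ y q' := hqmax' hj
      simp only [mem_visible, abs_le] at h hq
      grind
  linarith

theorem IsTarget.eq_of_visible_eq (hz : IsTarget V y i z) (hw : IsTarget V y j w)
    (hij : visible V y i = visible V y j) : z = w := by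
  obtain ⟨p, hp, q, hq, hpmin, hqmax, rfl⟩ := hz
  obtain ⟨p', hp', q', hq', hpmin', hqmax', rfl⟩ := hw
  rw [hij] at hp hq hpmin hqmax
  have hp_eq : y p = y p' := le_antisymm (hpmin hp') (hpmin' hp)
  have hq_eq : y q = y q' := le_antisymm (hqmax' hq) (hqmax hq')
  rw [hp_eq, hq_eq]

theorem IsTarget.abs_sub_midpoint_le (hz : IsTarget V y i z) (hj : j ∈ visible V y i) :
    |z - (y i + y j) / 2| ≤ V / 2 := by
  obtain ⟨p, hp, q, hq, hmin, hmax, rfl⟩ := hz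
  have hpj : y p ≤ y j := hmin hj
  have hjq : y j ≤ y q := hmax hj
  simp only [mem_visible, abs_le] at hp hq
  rw [abs_le]
  constructor <;> linarith

theorem isTarget_lpos_rpos {n : ℕ} (hV : 0 ≤ V) (x : ℕ → Fin (n + 1) → ℝ) (t : ℕ)
    (i : Fin (n + 1)) : IsTarget V (x t) i ((lpos V x t i + rpos V x t i) / 2) := by
  have hne : (visible V (x t) i).Nonempty := ⟨i, self_mem_visible hV⟩
  obtain ⟨p, hp, hmin⟩ := Set.exists_min_image _ (x t) (visible V (x t) i).toFinite hne
  obtain ⟨q, hq, hmax⟩ := Set.exists_max_image _ (x t) (visible V (x t) i).toFinite hne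
  have hl : lpos V x t i = x t p := ((isMinOn_iff.2 hmin).isGLB hp).csInf_eq (hne.image _)
  have hr : rpos V x t i = x t q := ((isMaxOn_iff.2 hmax).isLUB hq).csSup_eq (hne.image _)
  exact ⟨p, hp, q, hq, hmin, hmax, by rw [hl, hr]⟩

end Configuration

/-- `x t i` is the position at time `t` of robot `i` in a synchronous execution with visibility
radius `V`. The robots in `F` are faulty and never move. -/
structure IsExecution (V : ℝ) (F : Set ι) (x : ℕ → ι → ℝ) : Prop where
  faulty : ∀ i ∈ F, ∀ t, x t i = x 0 i
  target : ∀ i ∉ F, ∀ t, IsTarget V (x t) i (x (t + 1) i)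

/-- A set of robots is isolated in the execution `x` if its members never see a robot outside it. -/
def IsIsolated (V : ℝ) (x : ℕ → ι → ℝ) (S : Set ι) : Prop :=
  ∀ i ∈ S, ∀ t, visible V (x t) i ⊆ S

/-- The robots linked to `i` by a chain of robots, each of which sees the next one at some time,
possibly a different one for each link. Since visibility persists, these are the robots of the
connected component of `i` in the eventual visibility graph. -/
def chainComponent (V : ℝ) (x : ℕ → ι → ℝ) (i : ι) : Set ι :=
  {j | Relation.ReflTransGen (fun k l => ∃ t, l ∈ visible V (x t) k) j i}

theorem isIsolated_chainComponent (x : ℕ → ι → ℝ) (i : ι) :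
    IsIsolated V x (chainComponent V x i) :=
  fun _ hj t _ hk => Relation.ReflTransGen.head ⟨t, mem_visible_comm.1 hk⟩ hj

namespace IsExecution

variable {F S : Set ι} {x : ℕ → ι → ℝ} {a i j k : ι} {c P : ℝ} {s t : ℕ}

theorem neg (hx : IsExecution V F x) : IsExecution V F (fun t i => -x t i) where
  faulty i hi t := congrArg Neg.neg (hx.faulty i hi t)
  target i hi t := (hx.target i hi t).neg

theorem monotone_le (hx : IsExecution V F x) (hi : i ∉ F) (hj : j ∉ F) :
    Monotone fun t => x t i ≤ x t j :=
  monotone_nat_of_le_succ fun t => (hx.target i hi t).mono (hx.target j hj t)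

theorem abs_sub_midpoint_le (hx : IsExecution V F x) (hj : j ∈ visible V (x t) i) :
    |x (t + 1) i - (x t i + x t j) / 2| ≤ V / 2 := by
  by_cases hi : i ∈ F
  · have hij : |x t i - x t j| ≤ V := mem_visible_comm.1 hj
    rw [hx.faulty i hi (t + 1), ← hx.faulty i hi t,
      show x t i - (x t i + x t j) / 2 = (x t i - x t j) / 2 by ring, abs_div, abs_two]
    linarith
  · exact (hx.target i hi t).abs_sub_midpoint_le hj

theorem monotone_mem_visible (hx : IsExecution V F x) (i j : ι) :
    Monotone fun t => i ∈ visible V (x t) j := by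
  refine monotone_nat_of_le_succ fun t hij => ?_
  have hi := hx.abs_sub_midpoint_le (mem_visible_comm.1 hij)
  have hj := hx.abs_sub_midpoint_le hij
  rw [add_comm (x t j), abs_sub_comm] at hj
  calc |x (t + 1) i - x (t + 1) j|
    _ ≤ _ := abs_sub_le _ ((x t i + x t j) / 2) _
    _ ≤ V / 2 + V / 2 := add_le_add hi hj
    _ = V := add_halves V

theorem le_of_isIsolated (hx : IsExecution V F x) (hS : IsIsolated V x S)
    (hs : ∀ k ∈ S, c ≤ x s k) (hst : s ≤ t) : ∀ k ∈ S, c ≤ x t k := by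
  induction t, hst using Nat.le_induction with
  | base => exact hs
  | succ t _ ih =>
    intro k hk
    by_cases hkF : k ∈ F
    · rw [hx.faulty k hkF, ← hx.faulty k hkF t]
      exact ih k hk
    · obtain ⟨p, hp, q, hq, -, -, h⟩ := hx.target k hkF t
      linarith [ih p (hS k hk t hp), ih q (hS k hk t hq)]

theorem exists_isMinOn_of_lt [Finite ι] (hx : IsExecution V F x) (hF : ∀ k ∈ F, c ≤ x 0 k)
    (hlt : ∀ t, ∃ k ∈ S, x t k < c) :
    ∃ a ∈ S \ F, ∀ t, x t a < c ∧ IsMinOn (x t) S a := by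
  have hFt (t : ℕ) (k : ι) (hk : k ∈ F) : c ≤ x t k := hx.faulty k hk t ▸ hF k hk
  have hSF (t : ℕ) : ∃ k ∈ S \ F, x t k < c := by
    obtain ⟨k, hkS, hk⟩ := hlt t
    exact ⟨k, ⟨hkS, fun hkF => (hFt t k hkF).not_gt hk⟩, hk⟩
  obtain ⟨a, ha, hmin⟩ := Set.exists_min_image (S \ F) (x 0) (Set.toFinite _)
    ((hSF 0).imp fun _ => And.left)
  have hmin' (t : ℕ) (k : ι) (hk : k ∈ S \ F) : x t a ≤ x t k :=
    hx.monotone_le ha.2 hk.2 t.zero_le (hmin k hk)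
  refine ⟨a, ha, fun t => ?_⟩
  obtain ⟨b, hb, hbc⟩ := hSF t
  have hac : x t a < c := (hmin' t b hb).trans_lt hbc
  refine ⟨hac, fun k hk => ?_⟩
  by_cases hkF : k ∈ F
  · exact hac.le.trans (hFt t k hkF)
  · exact hmin' t k ⟨hk, hkF⟩

theorem monotone_of_isMinOn (hx : IsExecution V F x) (hS : IsIsolated V x S) (ha : a ∈ S \ F)
    (hmin : ∀ t, IsMinOn (x t) S a) : Monotone fun t => x t a := by
  refine monotone_nat_of_le_succ fun t => ?_
  obtain ⟨p, hp, q, hq, -, -, h⟩ := hx.target a ha.2 t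
  have hap : x t a ≤ x t p := hmin t (hS a ha.1 t hp)
  have haq : x t a ≤ x t q := hmin t (hS a ha.1 t hq)
  linarith

theorem tendsto_of_mem_visible (hx : IsExecution V F x) (hS : IsIsolated V x S)
    (hmin : ∀ t, IsMinOn (x t) S a) (ha : Tendsto (fun t => x t a) atTop (𝓝 P))
    (hjS : j ∈ S \ F) (hj : Tendsto (fun t => x t j) atTop (𝓝 P)) (hk : k ∈ visible V (x s) j) :
    Tendsto (fun t => x t k) atTop (𝓝 P) := by
  have hupper : Tendsto (fun t => 2 * x (t + 1) j - x t a) atTop (𝓝 P) := by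
    simpa [two_mul] using ((hj.comp (tendsto_add_atTop_nat 1)).const_mul 2).sub ha
  refine tendsto_of_tendsto_of_tendsto_of_le_of_le' ha hupper
    (Eventually.of_forall fun t => hmin t (hS j hjS.1 s hk)) ?_
  filter_upwards [eventually_ge_atTop s] with t hst
  obtain ⟨p, hp, q, -, -, hmax, h⟩ := hx.target j hjS.2 t
  have hkq : x t k ≤ x t q := hmax (hx.monotone_mem_visible k j hst hk)
  have hap : x t a ≤ x t p := hmin t (hS j hjS.1 t hp)
  linarith

theorem eventually_visible_eq [Finite ι] (hx : IsExecution V F x) (hV : 0 < V)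
    (hS : IsIsolated V x S) (hmin : ∀ t, IsMinOn (x t) S a)
    (ha : Tendsto (fun t => x t a) atTop (𝓝 P)) (hjS : j ∈ S \ F)
    (hj : Tendsto (fun t => x t j) atTop (𝓝 P)) :
    ∀ᶠ t in atTop, visible V (x t) j = {k | Tendsto (fun t => x t k) atTop (𝓝 P)} := by
  simp only [Set.ext_iff]
  refine eventually_all.2 fun k => ?_
  by_cases hk : Tendsto (fun t => x t k) atTop (𝓝 P)
  · have hdist : Tendsto (fun t => |x t k - x t j|) atTop (𝓝 0) := by
      simpa using (hk.sub hj).abs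
    filter_upwards [hdist.eventually_le_const hV] with t ht using iff_of_true ht hk
  · exact Eventually.of_forall fun t =>
      iff_of_false (fun h => hk (hx.tendsto_of_mem_visible hS hmin ha hjS hj h)) hk

theorem eventually_eq_of_tendsto [Finite ι] (hx : IsExecution V F x) (hV : 0 < V)
    (hS : IsIsolated V x S) (haS : a ∈ S \ F) (hmin : ∀ t, IsMinOn (x t) S a)
    (ha : Tendsto (fun t => x t a) atTop (𝓝 P)) (hiS : i ∈ S \ F)
    (hi : Tendsto (fun t => x t i) atTop (𝓝 P)) : ∀ᶠ t in atTop, x t i = x t a := by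
  rw [← map_add_atTop_eq_nat 1, eventually_map]
  filter_upwards [hx.eventually_visible_eq hV hS hmin ha hiS hi,
    hx.eventually_visible_eq hV hS hmin ha haS ha] with t hti hta
  exact (hx.target i hiS.2 t).eq_of_visible_eq (hx.target a haS.2 t) (hti.trans hta.symm)

theorem eventually_lt_of_not_tendsto (hx : IsExecution V F x) (hV : 0 < V)
    (hS : IsIsolated V x S) (haS : a ∈ S \ F) (hmin : ∀ t, IsMinOn (x t) S a)
    (ha : Tendsto (fun t => x t a) atTop (𝓝 P)) (hiS : i ∈ S)
    (hi : ¬ Tendsto (fun t => x t i) atTop (𝓝 P)) : ∀ᶠ t in atTop, P < x t i := by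
  filter_upwards [ha.eventually_const_lt (sub_lt_self P hV)] with t ht
  have hai : x t a ≤ x t i := hmin t hiS
  have hfar : V < |x t i - x t a| :=
    not_le.1 fun h => hi (hx.tendsto_of_mem_visible hS hmin ha haS ha h)
  rw [abs_of_nonneg (sub_nonneg.2 hai)] at hfar
  linarith

theorem tendsto_of_mem_chainComponent (hx : IsExecution V F x)
    (hmin : ∀ t, IsMinOn (x t) (chainComponent V x i) a)
    (ha : Tendsto (fun t => x t a) atTop (𝓝 P)) (hai : a ∈ chainComponent V x i)
    (hF : ∀ k ∈ F, ¬ Tendsto (fun t => x t k) atTop (𝓝 P)) :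
    Tendsto (fun t => x t i) atTop (𝓝 P) := by
  suffices h : ∀ j ∈ chainComponent V x i, Tendsto (fun t => x t j) atTop (𝓝 P) →
    Tendsto (fun t => x t i) atTop (𝓝 P) from h a hai ha
  intro j hj
  induction hj using Relation.ReflTransGen.head_induction_on with
  | refl => exact id
  | head hjk hki ih =>
    obtain ⟨s, hk⟩ := hjk
    exact fun hj => ih (hx.tendsto_of_mem_visible (isIsolated_chainComponent x i) hmin ha
      ⟨hki.head ⟨s, hk⟩, fun hjF => hF _ hjF hj⟩ hj hk)

theorem eventuallyConst_lt [Finite ι] (hx : IsExecution V F x) (hV : 0 < V)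
    (hF : ∀ k ∈ F, c ≤ x 0 k) (i : ι) : EventuallyConst (fun t => x t i < c) atTop := by
  have hFt (t : ℕ) (k : ι) (hk : k ∈ F) : c ≤ x t k := hx.faulty k hk t ▸ hF k hk
  have hS := isIsolated_chainComponent (V := V) x i
  have hiS : i ∈ chainComponent V x i := Relation.ReflTransGen.refl
  rw [eventuallyConst_pred]
  by_cases hiF : i ∈ F
  · exact Or.inr (Eventually.of_forall fun t => (hFt t i hiF).not_gt)
  by_cases hright : ∃ s, ∀ k ∈ chainComponent V x i, c ≤ x s k
  · obtain ⟨s, hs⟩ := hright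
    exact Or.inr ((eventually_ge_atTop s).mono fun t hst =>
      (hx.le_of_isIsolated hS hs hst i hiS).not_gt)
  push Not at hright
  obtain ⟨a, haS, ha⟩ := hx.exists_isMinOn_of_lt hF hright
  have hac (t : ℕ) : x t a < c := (ha t).1
  have hmin (t : ℕ) : IsMinOn (x t) (chainComponent V x i) a := (ha t).2
  obtain ⟨P, hP⟩ : ∃ P, Tendsto (fun t => x t a) atTop (𝓝 P) :=
    ⟨_, tendsto_atTop_ciSup (hx.monotone_of_isMinOn hS haS hmin)
      ⟨c, Set.forall_mem_range.2 fun t => (hac t).le⟩⟩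
  by_cases hi : Tendsto (fun t => x t i) atTop (𝓝 P)
  · exact Or.inl ((hx.eventually_eq_of_tendsto hV hS haS hmin hP ⟨hiS, hiF⟩ hi).mono
      fun t hia => hia ▸ hac t)
  · have hcP : c ≤ P := by
      by_contra! hPc
      exact hi (hx.tendsto_of_mem_chainComponent hmin hP haS.1 fun k hk hkP =>
        (ge_of_tendsto' hkP fun t => hFt t k hk).not_gt hPc)
    exact Or.inr ((hx.eventually_lt_of_not_tendsto hV hS haS hmin hP hiS hi).mono
      fun t hPi => (hcP.trans hPi.le).not_gt)

end IsExecution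

theorem size_stable_time_exists_general [Finite ι] {F : Set ι} {x : ℕ → ι → ℝ} {A B : ℝ}
    (hV : 0 < V) (hx : IsExecution V F x) (hA : ∀ k ∈ F, A ≤ x 0 k) (hB : ∀ k ∈ F, x 0 k ≤ B) :
    ∃ t₀, ∀ t, t₀ ≤ t → ∀ i j,
      (|x t i - x t j| ≤ V ↔ |x t₀ i - x t₀ j| ≤ V) ∧
      (i ∉ F → j ∉ F → (x t i ≤ x t j ↔ x t₀ i ≤ x t₀ j)) ∧
      (x t i < A ↔ x t₀ i < A) ∧ (x t i > B ↔ x t₀ i > B) := by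
  have hvis : EventuallyConst (fun t i j => |x t i - x t j| ≤ V) atTop :=
    eventuallyConst_pi fun i => eventuallyConst_pi fun j =>
      eventuallyConst_of_monotone (hx.monotone_mem_visible i j)
  have hord : EventuallyConst (fun t (i j : ↥Fᶜ) => x t i ≤ x t j) atTop :=
    eventuallyConst_pi fun i => eventuallyConst_pi fun j =>
      eventuallyConst_of_monotone (hx.monotone_le i.2 j.2)
  have hleft : EventuallyConst (fun t i => x t i < A) atTop :=
    eventuallyConst_pi (hx.eventuallyConst_lt hV hA)
  have hright : EventuallyConst (fun t i => -x t i < -B) atTop :=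
    eventuallyConst_pi (hx.neg.eventuallyConst_lt hV fun k hk => neg_le_neg (hB k hk))
  obtain ⟨t₀, h⟩ := eventuallyConst_atTop.1 (hvis.prodMk (hord.prodMk (hleft.prodMk hright)))
  simp only [Prod.mk.injEq, funext_iff, Subtype.forall, eq_iff_iff, neg_lt_neg_iff] at h
  refine ⟨t₀, fun t ht i j => ?_⟩
  obtain ⟨hvis, hord, hleft, hright⟩ := h t ht
  exact ⟨hvis i j, fun hi hj => hord i hi j hj, hleft i, hright i⟩

/-- (Existence of a Size-Stable Time) Eventually the visibility relation is
frozen, non-faulty robots no longer cross or merge, and no robot crosses a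
faulty robot any more. -/
theorem size_stable_time_exists
    (n : ℕ) (hn : 2 ≤ n) (V D : ℝ) (hV : 0 < V) (hD : 0 < D)
    (x : ℕ → Fin (n + 1) → ℝ)
    (hfault0 : ∀ t : ℕ, x t 0 = 0)
    (hfaultn : ∀ t : ℕ, x t (Fin.last n) = D)
    (hupd : ∀ t : ℕ, ∀ i : Fin (n + 1), i ≠ 0 → i ≠ Fin.last n →
      x (t + 1) i = (lpos V x t i + rpos V x t i) / 2)
    (hconn : ∀ i j : Fin (n + 1),
      Relation.ReflTransGen (fun a b : Fin (n + 1) => |x 0 a - x 0 b| ≤ V) i j)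
    : ∃ t₀ : ℕ, ∀ t : ℕ, t₀ ≤ t → ∀ i j : Fin (n + 1),
      ((|x t i - x t j| ≤ V) ↔ (|x t₀ i - x t₀ j| ≤ V)) ∧
      (i ≠ 0 → i ≠ Fin.last n → j ≠ 0 → j ≠ Fin.last n →
        ((x t i ≤ x t j) ↔ (x t₀ i ≤ x t₀ j))) ∧
      (i ≠ 0 → i ≠ Fin.last n →
        ((x t i < 0 ↔ x t₀ i < 0) ∧ (x t i > D ↔ x t₀ i > D))) := by
  have hx : IsExecution V {0, Fin.last n} x :=
    { faulty := by simp [hfault0, hfaultn]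
      target := fun i hi t => by
        rw [Set.mem_insert_iff, Set.mem_singleton_iff, not_or] at hi
        exact hupd t i hi.1 hi.2 ▸ isTarget_lpos_rpos hV.le x t i }
  obtain ⟨t₀, h⟩ := size_stable_time_exists_general (A := 0) (B := D) hV hx
    (by simp [hfault0, hfaultn, hD.le]) (by simp [hfault0, hfaultn, hD.le])
  exact ⟨t₀, fun t ht i j => (h t ht i j).imp_right <| And.imp
    (fun hord hi hi' hj hj' => hord (by simp [hi, hi']) (by simp [hj, hj'])) fun hside _ _ => hside⟩
end

section
/- (Existence of the Primary Chain) In the robot model on a line, assume the visibility graph at time 0 is connected. Then there exist a time t₀, an integer k ≥ 1, and robots i₀, i₁, …, i_k with i₀ = 0 and i_k = n (the two faulty robots) such that for every t ≥ t₀ and every 0 ≤ j ≤ k−1: r(i_j, t) = x t i_{j+1} and l(i_{j+1}, t) = x t i_j. That is, from some time on there is a mutual chain of robots connecting the left faulty robot to the right faulty robot, in which consecutive robots are each other's farthest visible neighbours. -/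
open Filter Topology

/-!
Visibility edges never break: if `i` and `j` see each other, both move into the interval of length
`V` centred at the midpoint of their positions. So the visibility graph `A` is eventually constant
and the motion becomes the iteration of the midrange operator of a fixed connected graph.
Its upper and lower limits are a sub- and a supersolution of `u = midrange A u`, and the comparison
principle makes them equal, so the positions converge to a solution `u`. In the limit the longest
edges, of length `δ` say, can be prolonged at every non-faulty robot, so each of them lies on a path
of such edges from the left faulty robot to the right one.

It remains to see that the ends of a longest edge are eventually each other's farthest neighbours.
If `δ = V`, the gaps along the path are at most `V` and add up to the distance between the faulty
robots, so all of them are exactly `V` at all times. If `δ < V`, then `A` consists of the pairs with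
limits at most `δ` apart, so robots with the same limit have the same neighbours and occupy the
same position after one step, while distinct limits are eventually strictly ordered.
-/

open Relation Set

variable {ι : Type*}

/-- The smallest value of `y` over the `A`-neighbours of `i`; on visibility graphs this is the
`l(i, t)` of the paper. -/
noncomputable def nbrMin (A : ι → ι → Prop) (y : ι → ℝ) (i : ι) : ℝ :=
  sInf (y '' {j | A i j})

/-- The largest value of `y` over the `A`-neighbours of `i`; on visibility graphs this is the
`r(i, t)` of the paper. -/
noncomputable def nbrMax (A : ι → ι → Prop) (y : ι → ℝ) (i : ι) : ℝ :=
  sSup (y '' {j | A i j})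

/-- The midpoint of the range of `y` over the `A`-neighbours of `i`: the destination of a
non-faulty robot. Its fixed points are the infinity harmonic functions of the graph `A`. -/
noncomputable def midrange (A : ι → ι → Prop) (y : ι → ℝ) (i : ι) : ℝ :=
  (nbrMin A y i + nbrMax A y i) / 2

/-- The visibility graph of the configuration `y`, with a loop at every robot if `0 ≤ V`. -/
def Visible (V : ℝ) (y : ι → ℝ) (i j : ι) : Prop :=
  |y j - y i| ≤ V

/-- `(i, j)` is a link of a mutual chain: `j` is at the rightmost neighbour of `i`, and `i` is at
the leftmost neighbour of `j`. -/
def IsMutual (A : ι → ι → Prop) (y : ι → ℝ) (i j : ι) : Prop :=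
  nbrMax A y i = y j ∧ nbrMin A y j = y i

/-- The edge `(i, j)` of `A` maximizes the increment of `u` among all edges of `A`. -/
def IsSteepest (A : ι → ι → Prop) (u : ι → ℝ) (i j : ι) : Prop :=
  A i j ∧ ∀ p q, A p q → u q - u p ≤ u j - u i

/-- A limit configuration `u` of robots with faulty robots `a` and `b` and eventual visibility
graph `A`: off `{a, b}` it is infinity harmonic, that is, a fixed point of the midrange operator. -/
structure IsHarmonicProfile (A : ι → ι → Prop) (a b : ι) (u : ι → ℝ) : Prop where
  refl : ∀ i, A i i
  symm : ∀ i j, A i j → A j i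
  path : ReflTransGen A a b
  lt : u a < u b
  eq_midrange : ∀ i ∉ ({a, b} : Set ι), u i = midrange A u i

section Paths

variable {R : ι → ι → Prop}

lemma exists_seq_of_transGen {a b : ι} (h : TransGen R a b) :
    ∃ k : ℕ, 1 ≤ k ∧ ∃ c : ℕ → ι, c 0 = a ∧ c k = b ∧ ∀ j < k, R (c j) (c (j + 1)) := by
  induction h using TransGen.head_induction_on with
  | @single a hab =>
    exact ⟨1, le_rfl, fun m => m.casesOn a fun _ => b, rfl, rfl, fun j hj => by
      obtain rfl : j = 0 := by omega
      exact hab⟩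
  | @head a m ham _ ih =>
    obtain ⟨k, -, c, rfl, hcb, hc⟩ := ih
    refine ⟨k + 1, by omega, fun m => m.casesOn a c, rfl, hcb, fun j hj => ?_⟩
    cases j with
    | zero => exact ham
    | succ j => exact hc j (by omega)

lemma lt_of_transGen {f : ι → ℝ} (hf : ∀ i j, R i j → f i < f j) {i j : ι} (h : TransGen R i j) :
    f i < f j := by
  induction h with
  | single h => exact hf _ _ h
  | tail _ h ih => exact ih.trans (hf _ _ h)

lemma exists_mem_reflTransGen [Finite ι] {f : ι → ℝ} {S : Set ι} (hf : ∀ i j, R i j → f i < f j)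
    (hext : ∀ i j, R i j → j ∉ S → ∃ k, R j k) {i j : ι} (hij : R i j) :
    ∃ e ∈ S, ReflTransGen R j e := by
  obtain ⟨e, hje : ReflTransGen R j e, hmax⟩ :=
    exists_max_image {e | ReflTransGen R j e} f (toFinite _) ⟨j, .refl⟩
  refine ⟨e, by_contra fun heS => ?_, hje⟩
  obtain ⟨p, -, hpe⟩ := TransGen.tail'_iff.1 (TransGen.head' hij hje)
  obtain ⟨k, hek⟩ := hext p e hpe heS
  exact (hf e k hek).not_ge (hmax k (hje.tail hek))

end Paths

section NeighbourExtrema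

variable {A : ι → ι → Prop} {y z : ι → ℝ} {i j : ι}

lemma midrange_congr (h : ∀ k, A i k ↔ A j k) : midrange A y i = midrange A y j := by
  simp only [midrange, nbrMin, nbrMax, h]

lemma isMutual_of_adj (hij : A i j) (hji : A j i) (hright : ∀ k, A i k → y k ≤ y j)
    (hleft : ∀ k, A j k → y i ≤ y k) : IsMutual A y i j :=
  ⟨IsGreatest.csSup_eq ⟨mem_image_of_mem y hij, forall_mem_image.2 hright⟩,
    IsLeast.csInf_eq ⟨mem_image_of_mem y hji, forall_mem_image.2 hleft⟩⟩

variable [Finite ι]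

lemma le_nbrMax (y : ι → ℝ) (hij : A i j) : y j ≤ nbrMax A y i :=
  le_csSup (toFinite _).bddAbove (mem_image_of_mem y hij)

lemma nbrMin_le (y : ι → ℝ) (hij : A i j) : nbrMin A y i ≤ y j :=
  csInf_le (toFinite _).bddBelow (mem_image_of_mem y hij)

lemma exists_eq_nbrMax (hii : A i i) (y : ι → ℝ) : ∃ j, A i j ∧ y j = nbrMax A y i :=
  Nonempty.csSup_mem ⟨y i, mem_image_of_mem y hii⟩ ((toFinite {j | A i j}).image y)

lemma exists_eq_nbrMin (hii : A i i) (y : ι → ℝ) : ∃ j, A i j ∧ y j = nbrMin A y i :=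
  Nonempty.csInf_mem ⟨y i, mem_image_of_mem y hii⟩ ((toFinite {j | A i j}).image y)

lemma midrange_le_midrange_add (hii : A i i) {ε : ℝ} (h : ∀ j, y j ≤ z j + ε) :
    midrange A y i ≤ midrange A z i + ε := by
  obtain ⟨p, hip, hp⟩ := exists_eq_nbrMax hii y
  obtain ⟨q, hiq, hq⟩ := exists_eq_nbrMin hii z
  have hmax : nbrMax A y i ≤ nbrMax A z i + ε := by linarith [h p, le_nbrMax z hip]
  have hmin : nbrMin A y i ≤ nbrMin A z i + ε := by linarith [h q, nbrMin_le y hiq]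
  unfold midrange
  linarith

lemma midrange_mem_Icc (hii : A i i) {m M : ℝ} (h : ∀ j, y j ∈ Icc m M) :
    midrange A y i ∈ Icc m M := by
  obtain ⟨p, -, hp⟩ := exists_eq_nbrMax hii y
  obtain ⟨q, -, hq⟩ := exists_eq_nbrMin hii y
  have hpm := h p
  have hqm := h q
  rw [hp] at hpm
  rw [hq] at hqm
  unfold midrange
  constructor <;> linarith [hpm.1, hpm.2, hqm.1, hqm.2]

end NeighbourExtrema

section Comparison

variable [Finite ι] {A : ι → ι → Prop} {u v : ι → ℝ}

lemma eq_and_eq_of_contact {i j : ι} (hii : A i i) (hu : u i ≤ midrange A u i)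
    (hv : midrange A v i ≤ v i) (hcontact : ∀ k, A i k → u k - v k ≤ u i - v i)
    (htop : ∀ k, A i k → u k - v k = u i - v i → u k ≤ u i) (hij : A i j) :
    u j = u i ∧ v j = v i := by
  obtain ⟨p, hip, hp⟩ := exists_eq_nbrMax hii u
  obtain ⟨q, hiq, hq⟩ := exists_eq_nbrMin hii v
  unfold midrange at hu hv
  have hvp := le_nbrMax v hip
  have huq := nbrMin_le u hiq
  have hpc := hcontact p hip
  have hqc := hcontact q hiq
  have hpi : u p ≤ u i := htop p hip (by linarith)
  constructor <;> linarith [le_nbrMax u hij, le_nbrMax v hij, nbrMin_le u hij, nbrMin_le v hij]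

/-- Among the points where `u - v` is maximal take one where `u` is largest: there both functions
are constant on the neighbourhood, and this propagates along paths to `S`. -/
theorem le_of_le_midrange_of_midrange_le {S : Set ι} (hrefl : ∀ i, A i i)
    (hreach : ∀ i, ∃ s ∈ S, ReflTransGen A i s) (hu : ∀ i ∉ S, u i ≤ midrange A u i)
    (hv : ∀ i ∉ S, midrange A v i ≤ v i) (huv : ∀ s ∈ S, u s ≤ v s) : u ≤ v := by
  intro i
  by_contra! hi
  have : Nonempty ι := ⟨i⟩
  obtain ⟨p, hp⟩ := Finite.exists_max (u - v)
  obtain ⟨q, hqp : u q - v q = u p - v p, hq : ∀ k, u k - v k = u p - v p → u k ≤ u q⟩ :=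
    exists_max_image {k | u k - v k = u p - v p} u (toFinite _) ⟨p, rfl⟩
  have hmax : ∀ k, u k - v k ≤ u q - v q := fun k => (hp k).trans hqp.ge
  have hpos : 0 < u q - v q := (sub_pos.2 hi).trans_le (hmax i)
  have hconst : ∀ k, ReflTransGen A q k → u k = u q ∧ v k = v q := by
    intro k hk
    induction hk with
    | refl => exact ⟨rfl, rfl⟩
    | @tail b c _ hbc ih =>
      have hbS : b ∉ S := fun hb => by linarith [huv b hb, ih.1, ih.2]
      rw [← ih.1, ← ih.2]
      refine eq_and_eq_of_contact (hrefl b) (hu b hbS) (hv b hbS) (fun k _ => ?_) (fun k _ hk => ?_)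
        hbc
      · rw [ih.1, ih.2]
        exact hmax k
      · rw [ih.1]
        exact hq k (by rw [hk, ih.1, ih.2, hqp])
  obtain ⟨s, hs, hqs⟩ := hreach q
  obtain ⟨hus, hvs⟩ := hconst s hqs
  linarith [huv s hs]

end Comparison

section Convergence

variable [Finite ι] {A : ι → ι → Prop} {x : ℕ → ι → ℝ}

lemma limsup_le_midrange_limsup {i : ι} {m M : ℝ} (hii : A i i) (hx : ∀ t j, x t j ∈ Icc m M)
    (hstep : ∀ t, x (t + 1) i = midrange A (x t) i) :
    limsup (fun t => x t i) atTop ≤ midrange A (fun j => limsup (fun t => x t j) atTop) i := by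
  refine le_of_forall_pos_le_add fun ε hε => ?_
  have hnear : ∀ᶠ t in atTop, ∀ j, x t j ≤ limsup (fun t => x t j) atTop + ε :=
    eventually_all.2 fun j =>
      (eventually_lt_of_limsup_lt (lt_add_of_pos_right _ hε)
        (isBoundedUnder_of ⟨M, fun t => (hx t j).2⟩)).mono fun _ => le_of_lt
  rw [← limsup_nat_add (fun t => x t i) 1]
  refine limsup_le_of_le
    (isBoundedUnder_of ⟨m, fun t => (hx (t + 1) i).1⟩).isCoboundedUnder_le ?_
  filter_upwards [hnear] with t ht
  exact (hstep t).trans_le (midrange_le_midrange_add hii ht)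

lemma midrange_liminf_le_liminf {i : ι} {m M : ℝ} (hii : A i i) (hx : ∀ t j, x t j ∈ Icc m M)
    (hstep : ∀ t, x (t + 1) i = midrange A (x t) i) :
    midrange A (fun j => liminf (fun t => x t j) atTop) i ≤ liminf (fun t => x t i) atTop := by
  refine le_of_forall_pos_sub_le fun ε hε => ?_
  have hnear : ∀ᶠ t in atTop, ∀ j, liminf (fun t => x t j) atTop ≤ x t j + ε :=
    eventually_all.2 fun j =>
      (eventually_lt_of_lt_liminf (sub_lt_self _ hε)
        (isBoundedUnder_of ⟨m, fun t => (hx t j).1⟩)).mono fun _ h => (sub_lt_iff_lt_add.1 h).le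
  rw [← liminf_nat_add (fun t => x t i) 1]
  refine le_liminf_of_le
    (isBoundedUnder_of ⟨M, fun t => (hx (t + 1) i).2⟩).isCoboundedUnder_ge ?_
  filter_upwards [hnear] with t ht
  rw [hstep t, sub_le_iff_le_add]
  exact midrange_le_midrange_add hii ht

lemma exists_forall_mem_Icc {S : Set ι} (hrefl : ∀ i, A i i) (hfix : ∀ t, ∀ s ∈ S, x t s = x 0 s)
    (hupd : ∀ t, ∀ i ∉ S, x (t + 1) i = midrange A (x t) i) :
    ∃ m M : ℝ, ∀ t i, x t i ∈ Icc m M := by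
  obtain ⟨m, hm⟩ := (finite_range (x 0)).bddBelow
  obtain ⟨M, hM⟩ := (finite_range (x 0)).bddAbove
  have h0 : ∀ i, x 0 i ∈ Icc m M := fun i => ⟨hm ⟨i, rfl⟩, hM ⟨i, rfl⟩⟩
  refine ⟨m, M, fun t => ?_⟩
  induction t with
  | zero => exact h0
  | succ t ih =>
    intro i
    by_cases hi : i ∈ S
    · exact hfix (t + 1) i hi ▸ h0 i
    · exact hupd t i hi ▸ midrange_mem_Icc (hrefl i) ih

theorem exists_tendsto_of_eq_midrange {S : Set ι} (hrefl : ∀ i, A i i)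
    (hreach : ∀ i, ∃ s ∈ S, ReflTransGen A i s) (hfix : ∀ t, ∀ s ∈ S, x t s = x 0 s)
    (hupd : ∀ t, ∀ i ∉ S, x (t + 1) i = midrange A (x t) i) :
    ∃ u : ι → ℝ, (∀ i ∉ S, u i = midrange A u i) ∧
      ∀ i, Tendsto (fun t => x t i) atTop (𝓝 (u i)) := by
  obtain ⟨m, M, hx⟩ := exists_forall_mem_Icc hrefl hfix hupd
  have hbelow : ∀ i, atTop.IsBoundedUnder (· ≥ ·) fun t => x t i := fun i =>
    isBoundedUnder_of ⟨m, fun t => (hx t i).1⟩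
  have habove : ∀ i, atTop.IsBoundedUnder (· ≤ ·) fun t => x t i := fun i =>
    isBoundedUnder_of ⟨M, fun t => (hx t i).2⟩
  set U : ι → ℝ := fun i => limsup (fun t => x t i) atTop
  set L : ι → ℝ := fun i => liminf (fun t => x t i) atTop
  have hsub : ∀ i ∉ S, U i ≤ midrange A U i := fun i hi =>
    limsup_le_midrange_limsup (hrefl i) hx fun t => hupd t i hi
  have hsuper : ∀ i ∉ S, midrange A L i ≤ L i := fun i hi =>
    midrange_liminf_le_liminf (hrefl i) hx fun t => hupd t i hi
  have hUL : U ≤ L := le_of_le_midrange_of_midrange_le hrefl hreach hsub hsuper fun s hs => by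
    simp only [U, L, hfix _ s hs, limsup_const, liminf_const, le_refl]
  have heq : U = L := hUL.antisymm fun i => liminf_le_limsup (habove i) (hbelow i)
  exact ⟨U, fun i hi => (hsub i hi).antisymm (heq ▸ hsuper i hi), fun i =>
    tendsto_of_le_liminf_of_limsup_le (hUL i) le_rfl (habove i) (hbelow i)⟩

end Convergence

section SteepestEdges

variable {A : ι → ι → Prop} {u : ι → ℝ} {a b i j : ι}

lemma IsSteepest.of_sub_le {p q : ι} (h : IsSteepest A u i j) (hpq : A p q)
    (hle : u j - u i ≤ u q - u p) : IsSteepest A u p q :=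
  ⟨hpq, fun p' q' h' => (h.2 p' q' h').trans hle⟩

lemma IsSteepest.lt (hpath : ReflTransGen A a b) (hab : u a < u b) (h : IsSteepest A u i j) :
    u i < u j := by
  by_contra! hle
  suffices u b ≤ u a from hab.not_ge this
  clear hab
  induction hpath with
  | refl => exact le_rfl
  | tail _ hbc ih => linarith [h.2 _ _ hbc]

variable [Finite ι]

lemma exists_isSteepest (A : ι → ι → Prop) (u : ι → ℝ) (hij : A i j) :
    ∃ p q, IsSteepest A u p q := by
  obtain ⟨⟨p, q⟩, hpq, hmax⟩ := exists_max_image {e : ι × ι | A e.1 e.2} (fun e => u e.2 - u e.1)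
    (toFinite _) ⟨(i, j), hij⟩
  exact ⟨p, q, hpq, fun p' q' h => hmax (p', q') h⟩

lemma IsSteepest.exists_right (hrefl : ∀ i, A i i) (hsymm : ∀ i j, A i j → A j i)
    (h : IsSteepest A u i j) (hj : u j = midrange A u j) : ∃ k, IsSteepest A u j k := by
  obtain ⟨k, hjk, hk⟩ := exists_eq_nbrMax (hrefl j) u
  refine ⟨k, h.of_sub_le hjk ?_⟩
  unfold midrange at hj
  linarith [nbrMin_le u (hsymm i j h.1)]

lemma IsSteepest.exists_left (hrefl : ∀ i, A i i) (hsymm : ∀ i j, A i j → A j i)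
    (h : IsSteepest A u i j) (hi : u i = midrange A u i) : ∃ k, IsSteepest A u k i := by
  obtain ⟨k, hik, hk⟩ := exists_eq_nbrMin (hrefl i) u
  refine ⟨k, h.of_sub_le (hsymm i k hik) ?_⟩
  unfold midrange at hi
  linarith [le_nbrMax u h.1]

theorem IsHarmonicProfile.reflTransGen (hu : IsHarmonicProfile A a b u) (h : IsSteepest A u i j) :
    ReflTransGen (IsSteepest A u) a i ∧ ReflTransGen (IsSteepest A u) j b := by
  have hlt : ∀ p q, IsSteepest A u p q → u p < u q := fun p q => IsSteepest.lt hu.path hu.lt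
  obtain ⟨e, he, hje⟩ := exists_mem_reflTransGen hlt
    (fun p q hpq hq => hpq.exists_right hu.refl hu.symm (hu.eq_midrange q hq)) h
  obtain ⟨s, hs, his⟩ := exists_mem_reflTransGen (R := Function.swap (IsSteepest A u))
    (f := -u) (fun p q hpq => neg_lt_neg (hlt q p hpq))
    (fun p q hpq hq => IsSteepest.exists_left hu.refl hu.symm hpq (hu.eq_midrange q hq)) h
  have hsi := reflTransGen_swap.1 his
  have hse : u s < u e := lt_of_transGen hlt ((TransGen.tail' hsi h).trans_left hje)
  rcases hs with rfl | rfl <;> rcases he with rfl | rfl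
  · exact absurd hse (lt_irrefl _)
  · exact ⟨hsi, hje⟩
  · exact absurd hse hu.lt.not_gt
  · exact absurd hse (lt_irrefl _)

end SteepestEdges

section Visibility

variable {V : ℝ} {y z : ι → ℝ} {i j : ι}

lemma visible_refl (hV : 0 ≤ V) (y : ι → ℝ) (i : ι) : Visible V y i i := by
  rwa [Visible, sub_self, abs_zero]

lemma visible_symm (V : ℝ) (y : ι → ℝ) (i j : ι) (h : Visible V y i j) : Visible V y j i :=
  (abs_sub_comm _ _).trans_le h

variable [Finite ι]

lemma midrange_visible_mem_Icc (hV : 0 ≤ V) (h : Visible V y i j) :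
    midrange (Visible V y) y i ∈ Icc ((y i + y j - V) / 2) ((y i + y j + V) / 2) := by
  obtain ⟨p, hip, hp⟩ := exists_eq_nbrMin (visible_refl hV y i) y
  obtain ⟨q, hiq, hq⟩ := exists_eq_nbrMax (visible_refl hV y i) y
  have hmin : y i - V ≤ nbrMin (Visible V y) y i := by linarith [(abs_le.1 hip).1]
  have hmax : nbrMax (Visible V y) y i ≤ y i + V := by linarith [(abs_le.1 hiq).2]
  unfold midrange
  constructor <;> linarith [nbrMin_le y h, le_nbrMax y h]

lemma Visible.step (hV : 0 ≤ V) (hz : ∀ i, z i = y i ∨ z i = midrange (Visible V y) y i)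
    (h : Visible V y i j) : Visible V z i j := by
  have hmem : ∀ {i j}, Visible V y i j →
      z i ∈ Icc ((y i + y j - V) / 2) ((y i + y j + V) / 2) := by
    intro i j hij
    rcases hz i with hi | hi <;> rw [hi]
    · constructor <;> linarith [(abs_le.1 hij).1, (abs_le.1 hij).2]
    · exact midrange_visible_mem_Icc hV hij
  obtain ⟨hi₁, hi₂⟩ := hmem h
  obtain ⟨hj₁, hj₂⟩ := hmem (visible_symm V y i j h)
  exact abs_le.2 ⟨by linarith, by linarith⟩

lemma monotone_visible {x : ℕ → ι → ℝ} {S : Set ι} (hV : 0 ≤ V)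
    (hfix : ∀ t, ∀ s ∈ S, x t s = x 0 s)
    (hupd : ∀ t, ∀ i ∉ S, x (t + 1) i = midrange (Visible V (x t)) (x t) i) :
    Monotone fun t => Visible V (x t) :=
  monotone_nat_of_le_succ fun t _ _ => Visible.step hV fun i => by
    by_cases hi : i ∈ S
    · exact .inl ((hfix (t + 1) i hi).trans (hfix t i hi).symm)
    · exact .inr (hupd t i hi)

end Visibility

section TightRadius

variable {V : ℝ} {A : ι → ι → Prop} {u y : ι → ℝ} {i j : ι}

lemma IsSteepest.sub_le_sub_of_reflTransGen (hy : Visible V y = A) (h : IsSteepest A u i j)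
    (hV : V ≤ u j - u i) {p q : ι} (hpq : ReflTransGen (IsSteepest A u) p q) :
    y q - y p ≤ u q - u p := by
  subst hy
  induction hpq with
  | refl => simp only [sub_self, le_refl]
  | tail _ hbc ih => linarith [(abs_le.1 hbc.1).2, hbc.2 _ _ h.1]

theorem IsHarmonicProfile.isMutual_of_le [Finite ι] {a b : ι} (hu : IsHarmonicProfile A a b u)
    (hy : Visible V y = A) (ha : y a = u a) (hb : y b = u b) (h : IsSteepest A u i j)
    (hV : V ≤ u j - u i) : IsMutual A y i j := by
  obtain ⟨hai, hjb⟩ := hu.reflTransGen h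
  have hi := h.sub_le_sub_of_reflTransGen hy hV hai
  have hj := h.sub_le_sub_of_reflTransGen hy hV hjb
  have hgap : V ≤ y j - y i := by linarith
  subst hy
  refine isMutual_of_adj h.1 (visible_symm V y i j h.1) (fun k hk => ?_) fun k hk => ?_
  · linarith [hgap, (abs_le.1 hk).2]
  · linarith [hgap, (abs_le.1 hk).1]

end TightRadius

section SlackRadius

variable {V : ℝ} {A : ι → ι → Prop} {u : ι → ℝ} {x : ℕ → ι → ℝ} {a b i j : ι}

lemma adj_of_abs_sub_lt (hvis : ∀ t, Visible V (x t) = A)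
    (hlim : ∀ i, Tendsto (fun t => x t i) atTop (𝓝 (u i))) (hij : |u j - u i| < V) : A i j := by
  obtain ⟨t, ht⟩ := (((hlim j).sub (hlim i)).abs.eventually_lt_const hij).exists
  exact hvis t ▸ ht.le

lemma IsSteepest.adj_iff (hsymm : ∀ i j, A i j → A j i) (h : IsSteepest A u i j)
    (hV : u j - u i < V) (hnear : ∀ p q, |u q - u p| < V → A p q) {p q : ι} :
    A p q ↔ |u q - u p| ≤ u j - u i := by
  refine ⟨fun hpq => abs_le.2 ⟨?_, h.2 p q hpq⟩, fun hpq => hnear p q (hpq.trans_lt hV)⟩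
  linarith [h.2 q p (hsymm p q hpq)]

lemma apply_succ_eq_of_limit_eq {S : Set ι} (hfix : ∀ s ∈ S, ∀ p, u p = u s → p = s)
    (hupd : ∀ t, ∀ i ∉ S, x (t + 1) i = midrange A (x t) i)
    (hcongr : ∀ p q, u p = u q → ∀ k, A p k ↔ A q k) (t : ℕ) {p q : ι} (hpq : u p = u q) :
    x (t + 1) p = x (t + 1) q := by
  by_cases hp : p ∈ S
  · rw [hfix p hp q hpq.symm]
  by_cases hq : q ∈ S
  · rw [hfix q hq p hpq]
  rw [hupd t p hp, hupd t q hq, midrange_congr (hcongr p q hpq)]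

variable [Finite ι]

lemma IsHarmonicProfile.eq_of_apply_eq (hu : IsHarmonicProfile A a b u) (h : IsSteepest A u i j)
    (hcongr : ∀ p q, u p = u q → ∀ k, A p k ↔ A q k) :
    ∀ s ∈ ({a, b} : Set ι), ∀ p, u p = u s → p = s := by
  have hlt : ∀ p q, TransGen (IsSteepest A u) p q → u p < u q := fun p q =>
    lt_of_transGen fun p q => IsSteepest.lt hu.path hu.lt
  have hab : TransGen (IsSteepest A u) a b :=
    (TransGen.tail' (hu.reflTransGen h).1 h).trans_left (hu.reflTransGen h).2
  rintro s (rfl | rfl) p hp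
  · obtain ⟨c, hac, -⟩ := TransGen.head'_iff.1 hab
    have hpc : IsSteepest A u p c := hac.of_sub_le ((hcongr p s hp c).2 hac.1) (by rw [hp])
    exact (reflTransGen_iff_eq_or_transGen.1 (hu.reflTransGen hpc).1).resolve_right
      fun hsp => (hlt s p hsp).ne' hp
  · obtain ⟨c, -, hcb⟩ := TransGen.tail'_iff.1 hab
    have hcp : IsSteepest A u c p :=
      hcb.of_sub_le (hu.symm p c ((hcongr p s hp c).2 (hu.symm c s hcb.1))) (by rw [hp])
    exact (reflTransGen_iff_eq_or_transGen.1 (hu.reflTransGen hcp).2).resolve_right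
      (fun hps => (hlt p s hps).ne hp) |>.symm

lemma eventually_le_of_limit_le (hlim : ∀ i, Tendsto (fun t => x t i) atTop (𝓝 (u i)))
    (heq : ∀ᶠ t in atTop, ∀ p q, u p = u q → x t p = x t q) :
    ∀ᶠ t in atTop, ∀ p q, u p ≤ u q → x t p ≤ x t q := by
  have hlt : ∀ᶠ t in atTop, ∀ p q, u p < u q → x t p < x t q :=
    eventually_all.2 fun p => eventually_all.2 fun q => eventually_imp_distrib_left.2 fun h =>
      (hlim p).eventually_lt (hlim q) h
  filter_upwards [heq, hlt] with t ht_eq ht_lt p q hpq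
  exact hpq.eq_or_lt.elim (fun h => (ht_eq p q h).le) fun h => (ht_lt p q h).le

theorem IsHarmonicProfile.eventually_isMutual_of_lt (hu : IsHarmonicProfile A a b u)
    (hvis : ∀ t, Visible V (x t) = A) (hlim : ∀ i, Tendsto (fun t => x t i) atTop (𝓝 (u i)))
    (hupd : ∀ t, ∀ i ∉ ({a, b} : Set ι), x (t + 1) i = midrange A (x t) i)
    (h : IsSteepest A u i j) (hV : u j - u i < V) :
    ∀ᶠ t in atTop, IsMutual A (x t) i j := by
  have hcongr : ∀ p q, u p = u q → ∀ k, A p k ↔ A q k := fun p q hpq k => by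
    have hadj : ∀ p, A p k ↔ |u k - u p| ≤ u j - u i := fun _ =>
      h.adj_iff hu.symm hV fun _ _ => adj_of_abs_sub_lt hvis hlim
    rw [hadj, hadj, hpq]
  have heq : ∀ᶠ t in atTop, ∀ p q, u p = u q → x t p = x t q := by
    filter_upwards [eventually_ge_atTop 1] with t ht p q hpq
    obtain ⟨s, rfl⟩ := Nat.exists_eq_add_of_le' ht
    exact apply_succ_eq_of_limit_eq (hu.eq_of_apply_eq h hcongr) hupd hcongr s hpq
  filter_upwards [eventually_le_of_limit_le hlim heq] with t hle
  refine isMutual_of_adj h.1 (hu.symm i j h.1) (fun k hk => hle k j ?_) fun k hk => hle i k ?_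
  · linarith [h.2 i k hk]
  · linarith [h.2 k j (hu.symm j k hk)]

end SlackRadius

section PrimaryChain

variable [Finite ι] {V : ℝ} {x : ℕ → ι → ℝ} {a b : ι}

theorem exists_mutual_chain_of_visible_eq (hV : 0 ≤ V) (hab : x 0 a < x 0 b)
    (hfix : ∀ t, ∀ s ∈ ({a, b} : Set ι), x t s = x 0 s)
    (hupd : ∀ t, ∀ i ∉ ({a, b} : Set ι), x (t + 1) i = midrange (Visible V (x t)) (x t) i)
    (hconn : ∀ i j, ReflTransGen (Visible V (x 0)) i j)
    (hvis : ∀ t, Visible V (x t) = Visible V (x 0)) :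
    ∃ k : ℕ, 1 ≤ k ∧ ∃ c : ℕ → ι, c 0 = a ∧ c k = b ∧
      ∀ᶠ t in atTop, ∀ j < k, IsMutual (Visible V (x t)) (x t) (c j) (c (j + 1)) := by
  simp only [hvis] at hupd ⊢
  have hrefl := visible_refl hV (x 0)
  obtain ⟨u, hu, hlim⟩ :=
    exists_tendsto_of_eq_midrange hrefl (fun i => ⟨a, .inl rfl, hconn i a⟩) hfix hupd
  have hux : ∀ s ∈ ({a, b} : Set ι), u s = x 0 s := fun s hs =>
    tendsto_nhds_unique (hlim s) (by simp only [hfix _ s hs, tendsto_const_nhds])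
  have huab : u a < u b := by rwa [hux a (.inl rfl), hux b (.inr rfl)]
  have hprof : IsHarmonicProfile (Visible V (x 0)) a b u :=
    ⟨hrefl, visible_symm V (x 0), hconn a b, huab, hu⟩
  have hmutual : ∀ p q, IsSteepest (Visible V (x 0)) u p q →
      ∀ᶠ t in atTop, IsMutual (Visible V (x 0)) (x t) p q := fun p q hpq => by
    have hxu : ∀ t, ∀ s ∈ ({a, b} : Set ι), x t s = u s := fun t s hs =>
      (hfix t s hs).trans (hux s hs).symm
    rcases le_or_gt V (u q - u p) with hle | hlt
    · exact .of_forall fun t =>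
        hprof.isMutual_of_le (hvis t) (hxu t a (.inl rfl)) (hxu t b (.inr rfl)) hpq hle
    · exact hprof.eventually_isMutual_of_lt hvis hlim hupd hpq hlt
  obtain ⟨p, q, hpq⟩ := exists_isSteepest (Visible V (x 0)) u (hrefl a)
  obtain ⟨hap, hqb⟩ := hprof.reflTransGen hpq
  obtain ⟨k, hk, c, hc0, hck, hc⟩ :=
    exists_seq_of_transGen ((TransGen.tail' hap hpq).trans_left hqb)
  exact ⟨k, hk, c, hc0, hck,
    (finite_Iio k).eventually_all.2 fun j hj => hmutual (c j) (c (j + 1)) (hc j hj)⟩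

theorem primary_chain_exists_general (hV : 0 ≤ V) (hab : x 0 a < x 0 b)
    (hfix : ∀ t, ∀ s ∈ ({a, b} : Set ι), x t s = x 0 s)
    (hupd : ∀ t, ∀ i ∉ ({a, b} : Set ι), x (t + 1) i = midrange (Visible V (x t)) (x t) i)
    (hconn : ∀ i j, ReflTransGen (Visible V (x 0)) i j) :
    ∃ t₀ k : ℕ, 1 ≤ k ∧ ∃ c : ℕ → ι, c 0 = a ∧ c k = b ∧
      ∀ t ≥ t₀, ∀ j < k, IsMutual (Visible V (x t)) (x t) (c j) (c (j + 1)) := by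
  have hmono : Monotone fun t => Visible V (x t) := monotone_visible hV hfix hupd
  obtain ⟨T, hT⟩ := WellFoundedGT.monotone_chain_condition ⟨_, hmono⟩
  have hfixT : ∀ t, ∀ s ∈ ({a, b} : Set ι), x (T + t) s = x (T + 0) s := fun t s hs =>
    (hfix _ s hs).trans (hfix _ s hs).symm
  have habT : x (T + 0) a < x (T + 0) b := by
    rwa [hfix _ a (.inl rfl), hfix _ b (.inr rfl)]
  obtain ⟨k, hk, c, hc0, hck, hc⟩ := exists_mutual_chain_of_visible_eq (x := fun t => x (T + t))
    hV habT hfixT (fun t => hupd (T + t))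
    (fun i j => ReflTransGen.mono (hmono (Nat.zero_le T)) i j (hconn i j))
    (fun t => (hT (T + t) (Nat.le_add_right T t)).symm)
  obtain ⟨s, hs⟩ := eventually_atTop.1 hc
  refine ⟨T + s, k, hk, c, hc0, hck, fun t ht => ?_⟩
  obtain ⟨r, rfl⟩ := Nat.exists_eq_add_of_le ht
  rw [Nat.add_assoc]
  exact hs (s + r) (Nat.le_add_right s r)

end PrimaryChain

/-- (Existence of the Primary Chain) From some time on there is a mutual chain
of robots connecting the left faulty robot to the right faulty robot. -/
theorem primary_chain_exists
    (n : ℕ) (hn : 2 ≤ n) (V D : ℝ) (hV : 0 < V) (hD : 0 < D)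
    (x : ℕ → Fin (n + 1) → ℝ)
    (hfault0 : ∀ t : ℕ, x t 0 = 0)
    (hfaultn : ∀ t : ℕ, x t (Fin.last n) = D)
    (hupd : ∀ t : ℕ, ∀ i : Fin (n + 1), i ≠ 0 → i ≠ Fin.last n →
      x (t + 1) i = (lpos V x t i + rpos V x t i) / 2)
    (hconn : ∀ i j : Fin (n + 1),
      Relation.ReflTransGen (fun a b : Fin (n + 1) => |x 0 a - x 0 b| ≤ V) i j)
    : ∃ t₀ : ℕ, ∃ k : ℕ, 1 ≤ k ∧ ∃ c : ℕ → Fin (n + 1),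
      c 0 = 0 ∧ c k = Fin.last n ∧
      ∀ t : ℕ, t₀ ≤ t → ∀ j : ℕ, j < k →
        rpos V x t (c j) = x t (c (j + 1)) ∧
        lpos V x t (c (j + 1)) = x t (c j) := by
  exact primary_chain_exists_general hV.le (a := 0) (b := Fin.last n)
    (by rwa [hfault0, hfaultn]) (by rintro t _ (rfl | rfl) <;> simp only [hfault0, hfaultn])
    (fun t i hi => hupd t i (fun h => hi (.inl h)) fun h => hi (.inr h))
    fun i j => ReflTransGen.mono (fun _ _ => (abs_sub_comm _ _).trans_le) i j (hconn i j)
end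

section
/- (Uniqueness of the Primary Chain) In the robot model on a line, fix a time t₀ and suppose that i₀ = 0, i₁, …, i_k = n and i′₀ = 0, i′₁, …, i′_m = n are two sequences of robots, each satisfying, for every t ≥ t₀ and every consecutive pair in the sequence, that r(i_j, t) = x t i_{j+1} and l(i_{j+1}, t) = x t i_j (respectively for the primed sequence). Then k = m and x t i_j = x t i′_j for every t ≥ t₀ and every 0 ≤ j ≤ k; i.e., the primary chain is unique up to robots at identical positions. -/
open Filter Topology

/-!
The robots of a mutual chain enter only through their positions: reading from the left, each
position is the image of the previous one under the map `r` sending a point to the farthest right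
visible position, and reading from the right, each is the image of the next one under the analogous
map `l`. Hence two chains with common ends agree when counted from the left, and also when
counted from the right. If the second chain had `d > 0` more links than the first, its `d`-th
position would coincide with its starting position; since `r` never moves a robot's position to the
left, the starting position would be a fixed point of `r`, and the chain could never reach its other
end.
-/

/-- A mutual chain with `k` links, recorded by the positions `p 0, …, p k` it visits (values of `p`
beyond `k` are irrelevant). The maps `r` and `l` send a position to the farthest position visible
from it on the right and on the left. -/
def IsMutualChain {α : Type*} (r l : α → α) (k : ℕ) (p : ℕ → α) : Prop :=
  ∀ j < k, r (p j) = p (j + 1) ∧ l (p (j + 1)) = p j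

namespace IsMutualChain

variable {α : Type*} {r l : α → α} {k m : ℕ} {p q : ℕ → α}

theorem iterate_right (h : IsMutualChain r l k p) {j : ℕ} (hj : j ≤ k) : r^[j] (p 0) = p j := by
  induction j with
  | zero => rfl
  | succ j ih => rw [Function.iterate_succ_apply', ih (by lia), (h j hj).1]

theorem iterate_left (h : IsMutualChain r l k p) {i j : ℕ} (hij : i + j ≤ k) :
    l^[j] (p (i + j)) = p i := by
  induction j with
  | zero => rfl
  | succ j ih => rw [Function.iterate_succ_apply, ← add_assoc, (h (i + j) hij).2, ih (by lia)]

theorem eq_of_start_eq (hp : IsMutualChain r l k p) (hq : IsMutualChain r l m q)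
    (hstart : p 0 = q 0) {j : ℕ} (hjk : j ≤ k) (hjm : j ≤ m) : p j = q j := by
  rw [← hp.iterate_right hjk, hstart, hq.iterate_right hjm]

theorem start_eq_of_end_eq {d : ℕ} (hp : IsMutualChain r l k p)
    (hq : IsMutualChain r l (d + k) q) (hend : p k = q (d + k)) : p 0 = q d := by
  have hp0 : l^[k] (p k) = p 0 := by simpa only [zero_add] using hp.iterate_left (zero_add k).le
  rw [← hp0, hend, hq.iterate_left le_rfl]

theorem monotoneOn [Preorder α] (h : IsMutualChain r l k p) (hr : ∀ j < k, p j ≤ r (p j)) :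
    MonotoneOn p (Set.Iic k) :=
  monotoneOn_of_le_succ Set.ordConnected_Iic fun j _ _ hj => (hr j hj).trans_eq (h j hj).1

variable [PartialOrder α]

theorem start_ne_of_pos (h : IsMutualChain r l k p) (hr : ∀ j < k, p j ≤ r (p j))
    (hne : p 0 ≠ p k) {d : ℕ} (hd : 0 < d) (hdk : d ≤ k) : p 0 ≠ p d := by
  intro hreturn
  have hmono := h.monotoneOn hr
  have hfirst : p 1 = p 0 :=
    le_antisymm ((hmono (hd.trans_le hdk) hdk hd).trans_eq hreturn.symm)
      (hmono k.zero_le (hd.trans_le hdk) zero_le_one)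
  have hfixed : r (p 0) = p 0 := (h 0 (hd.trans_le hdk)).1.trans hfirst
  exact hne ((Function.iterate_fixed hfixed k).symm.trans (h.iterate_right le_rfl))

theorem length_le (hp : IsMutualChain r l k p) (hq : IsMutualChain r l m q)
    (hr : ∀ j < m, q j ≤ r (q j)) (hstart : p 0 = q 0) (hend : p k = q m) (hne : q 0 ≠ q m) :
    m ≤ k := by
  by_contra! hkm
  obtain ⟨d, rfl⟩ := Nat.exists_eq_add_of_le' hkm.le
  exact hq.start_ne_of_pos hr hne (by lia) (by lia)
    (hstart.symm.trans (hp.start_eq_of_end_eq hq hend))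

theorem length_eq (hp : IsMutualChain r l k p) (hq : IsMutualChain r l m q)
    (hpr : ∀ j < k, p j ≤ r (p j)) (hqr : ∀ j < m, q j ≤ r (q j))
    (hstart : p 0 = q 0) (hend : p k = q m) (hne : p 0 ≠ p k) : k = m :=
  le_antisymm (hq.length_le hp hpr hstart.symm hend.symm hne)
    (hp.length_le hq hqr hstart hend (hstart ▸ hend ▸ hne))

end IsMutualChain

section Visibility

variable {ι : Type*} {V : ℝ}

/-- The farthest left position visible from the point `a` when robot `j` stands at `p j`. It
depends on the observer only through its position, and `lpos V x t i` unfolds to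
`farthestLeft V (x t) (x t i)`. -/
noncomputable def farthestLeft (V : ℝ) (p : ι → ℝ) (a : ℝ) : ℝ :=
  sInf (p '' {j | |p j - a| ≤ V})

/-- The farthest right position visible from the point `a` when robot `j` stands at `p j`. It
depends on the observer only through its position, and `rpos V x t i` unfolds to
`farthestRight V (x t) (x t i)`. -/
noncomputable def farthestRight (V : ℝ) (p : ι → ℝ) (a : ℝ) : ℝ :=
  sSup (p '' {j | |p j - a| ≤ V})

theorem bddAbove_image_visible (p : ι → ℝ) (a : ℝ) : BddAbove (p '' {j | |p j - a| ≤ V}) := by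
  refine ⟨a + V, ?_⟩
  rintro _ ⟨j, hj, rfl⟩
  exact sub_le_iff_le_add'.1 (abs_le.1 hj).2

theorem le_farthestRight (hV : 0 ≤ V) (p : ι → ℝ) (i : ι) : p i ≤ farthestRight V p (p i) :=
  le_csSup (bddAbove_image_visible p (p i)) (Set.mem_image_of_mem p (by simpa using hV))

theorem primary_chain_unique_general (hV : 0 ≤ V) {x : ℕ → ι → ℝ} {t₀ k m : ℕ} {c c' : ℕ → ι}
    (hstart : ∀ t, t₀ ≤ t → x t (c 0) = x t (c' 0)) (hend : x t₀ (c k) = x t₀ (c' m))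
    (hne : x t₀ (c 0) ≠ x t₀ (c k))
    (hchain : ∀ t, t₀ ≤ t →
      IsMutualChain (farthestRight V (x t)) (farthestLeft V (x t)) k (x t ∘ c))
    (hchain' : ∀ t, t₀ ≤ t →
      IsMutualChain (farthestRight V (x t)) (farthestLeft V (x t)) m (x t ∘ c')) :
    k = m ∧ ∀ t, t₀ ≤ t → ∀ j, j ≤ k → x t (c j) = x t (c' j) := by
  have hkm : k = m :=
    (hchain t₀ le_rfl).length_eq (hchain' t₀ le_rfl)
      (fun j _ => le_farthestRight hV (x t₀) (c j)) (fun j _ => le_farthestRight hV (x t₀) (c' j))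
      (hstart t₀ le_rfl) hend hne
  exact ⟨hkm, fun t ht j hj =>
    (hchain t ht).eq_of_start_eq (hchain' t ht) (hstart t ht) hj (hkm ▸ hj)⟩

end Visibility

/-- (Uniqueness of the Primary Chain) Two mutual chains connecting the left
faulty robot to the right faulty robot have the same length and occupy the
same positions at all times. -/
theorem primary_chain_unique
    (n : ℕ) (hn : 2 ≤ n) (V D : ℝ) (hV : 0 < V) (hD : 0 < D)
    (x : ℕ → Fin (n + 1) → ℝ)
    (hfault0 : ∀ t : ℕ, x t 0 = 0)
    (hfaultn : ∀ t : ℕ, x t (Fin.last n) = D)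
    (hupd : ∀ t : ℕ, ∀ i : Fin (n + 1), i ≠ 0 → i ≠ Fin.last n →
      x (t + 1) i = (lpos V x t i + rpos V x t i) / 2)
    (t₀ : ℕ) (k m : ℕ) (hk : 1 ≤ k) (hm : 1 ≤ m)
    (c c' : ℕ → Fin (n + 1))
    (hc0 : c 0 = 0) (hck : c k = Fin.last n)
    (hc'0 : c' 0 = 0) (hc'm : c' m = Fin.last n)
    (hchain : ∀ t : ℕ, t₀ ≤ t → ∀ j : ℕ, j < k →
      rpos V x t (c j) = x t (c (j + 1)) ∧
      lpos V x t (c (j + 1)) = x t (c j))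
    (hchain' : ∀ t : ℕ, t₀ ≤ t → ∀ j : ℕ, j < m →
      rpos V x t (c' j) = x t (c' (j + 1)) ∧
      lpos V x t (c' (j + 1)) = x t (c' j)) :
    k = m ∧ ∀ t : ℕ, t₀ ≤ t → ∀ j : ℕ, j ≤ k → x t (c j) = x t (c' j) := by
  have hne : x t₀ (c 0) ≠ x t₀ (c k) := by simpa only [hc0, hck, hfault0, hfaultn] using hD.ne
  exact primary_chain_unique_general hV.le (fun t _ => by rw [hc0, hc'0]) (by rw [hck, hc'm]) hne
    hchain hchain'
end

section
/- (Distance Propagation) In the robot model on a line, let a and b be non-faulty robots such that for every time t: r(a,t) = x t b and l(b,t) = x t a (a and b are mutually chained), l(a,t) < x t a (some visible robot lies strictly to the left of a), and r(b,t) > x t b (some visible robot lies strictly to the right of b). Suppose x t b − x t a → V as t → ∞. Then x t a − l(a,t) → V and r(b,t) − x t b → V as t → ∞. -/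
/-!
Let `p` be the gap from `a` to its farthest left visible robot and `q` the gap from `b` to its
farthest right one. Since `a` and `b` move to midpoints while seeing each other as extremes, their
next distance is the average `(p + q) / 2`. Hence `p + q → 2V`, and since visibility bounds both
gaps by `V`, a deficit of either below `V` is at most that of `p + q` below `2V`.
-/

open Filter Topology

/-- Robots `a` and `b` are mutually chained at time `t`, with `a` on the left: `b` is the farthest
robot visible to the right of `a`, and `a` is the farthest robot visible to the left of `b`. As with
`rpos` and `lpos`, farthest neighbours are identified by their positions. -/
def MutuallyChained {n : ℕ} (V : ℝ) (x : ℕ → Fin (n + 1) → ℝ) (t : ℕ) (a b : Fin (n + 1)) : Prop :=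
  rpos V x t a = x t b ∧ lpos V x t b = x t a

/-- Robot `i` obeys the update rule of non-faulty robots at time `t`: it moves to the midpoint of its
farthest visible neighbours. -/
def MovesToMidpoint {n : ℕ} (V : ℝ) (x : ℕ → Fin (n + 1) → ℝ) (t : ℕ) (i : Fin (n + 1)) : Prop :=
  x (t + 1) i = (lpos V x t i + rpos V x t i) / 2

theorem tendsto_of_tendsto_add_of_le {α G : Type*} [AddCommGroup G] [PartialOrder G]
    [IsOrderedAddMonoid G] [TopologicalSpace G] [OrderTopology G] [ContinuousSub G]
    {l : Filter α} {u v : α → G} {c d : G}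
    (huv : Tendsto (fun s => u s + v s) l (𝓝 (c + d)))
    (hu : ∀ᶠ s in l, u s ≤ c) (hv : ∀ᶠ s in l, v s ≤ d) :
    Tendsto u l (𝓝 c) := by
  have hlower : Tendsto (fun s => u s + v s - d) l (𝓝 c) := by
    simpa only [add_sub_cancel_right] using huv.sub_const d
  refine tendsto_of_tendsto_of_tendsto_of_le_of_le' hlower tendsto_const_nhds ?_ hu
  filter_upwards [hv] with s hs
  exact sub_le_iff_le_add.mpr (by gcongr)

section Robots

variable {n : ℕ} {V : ℝ} {x : ℕ → Fin (n + 1) → ℝ}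

theorem visible_positions_nonempty (hV : 0 ≤ V) (t : ℕ) (i : Fin (n + 1)) :
    (x t '' {j | |x t j - x t i| ≤ V}).Nonempty :=
  ⟨x t i, i, by simpa using hV, rfl⟩

theorem sub_lpos_le (hV : 0 ≤ V) (t : ℕ) (i : Fin (n + 1)) : x t i - lpos V x t i ≤ V := by
  refine sub_le_comm.mp (le_csInf (visible_positions_nonempty hV t i) ?_)
  rintro _ ⟨j, hj, rfl⟩
  exact sub_le_of_abs_sub_le_left hj

theorem rpos_sub_le (hV : 0 ≤ V) (t : ℕ) (i : Fin (n + 1)) : rpos V x t i - x t i ≤ V := by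
  refine sub_le_iff_le_add.mpr (csSup_le (visible_positions_nonempty hV t i) ?_)
  rintro _ ⟨j, hj, rfl⟩
  exact sub_le_iff_le_add.mp (le_of_abs_le hj)

theorem MutuallyChained.outer_gaps_add_eq {t : ℕ} {a b : Fin (n + 1)}
    (hab : MutuallyChained V x t a b) (ha : MovesToMidpoint V x t a)
    (hb : MovesToMidpoint V x t b) :
    (x t a - lpos V x t a) + (rpos V x t b - x t b) = 2 * (x (t + 1) b - x (t + 1) a) := by
  rw [ha, hb, hab.1, hab.2]
  ring

theorem distance_propagation_general {a b : Fin (n + 1)} (hV : 0 ≤ V)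
    (ha : ∀ᶠ t in atTop, MovesToMidpoint V x t a)
    (hb : ∀ᶠ t in atTop, MovesToMidpoint V x t b)
    (hab : ∀ᶠ t in atTop, MutuallyChained V x t a b)
    (hd : Tendsto (fun t => x t b - x t a) atTop (𝓝 V)) :
    Tendsto (fun t => x t a - lpos V x t a) atTop (𝓝 V) ∧
      Tendsto (fun t => rpos V x t b - x t b) atTop (𝓝 V) := by
  have hleft_le : ∀ᶠ t in atTop, x t a - lpos V x t a ≤ V := .of_forall (sub_lpos_le hV · a)
  have hright_le : ∀ᶠ t in atTop, rpos V x t b - x t b ≤ V := .of_forall (rpos_sub_le hV · b)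
  have hsum : Tendsto (fun t => (x t a - lpos V x t a) + (rpos V x t b - x t b)) atTop
      (𝓝 (V + V)) := by
    rw [← two_mul]
    refine (((tendsto_add_atTop_iff_nat 1).mpr hd).const_mul 2).congr' ?_
    filter_upwards [ha, hb, hab] with t hat hbt habt
    exact (habt.outer_gaps_add_eq hat hbt).symm
  exact ⟨tendsto_of_tendsto_add_of_le hsum hleft_le hright_le,
    tendsto_of_tendsto_add_of_le (by simpa only [add_comm] using hsum) hright_le hleft_le⟩

end Robots

/-- (Distance Propagation) When the distance between two mutually chained
robots tends to `V`, this limit behaviour propagates to their farthest left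
and farthest right visible neighbours. -/
theorem distance_propagation
    (n : ℕ) (hn : 2 ≤ n) (V D : ℝ) (hV : 0 < V) (hD : 0 < D)
    (x : ℕ → Fin (n + 1) → ℝ)
    (hfault0 : ∀ t : ℕ, x t 0 = 0)
    (hfaultn : ∀ t : ℕ, x t (Fin.last n) = D)
    (hupd : ∀ t : ℕ, ∀ i : Fin (n + 1), i ≠ 0 → i ≠ Fin.last n →
      x (t + 1) i = (lpos V x t i + rpos V x t i) / 2)
    (a b : Fin (n + 1)) (ha0 : a ≠ 0) (han : a ≠ Fin.last n)
    (hb0 : b ≠ 0) (hbn : b ≠ Fin.last n)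
    (hmutual : ∀ t : ℕ, rpos V x t a = x t b ∧ lpos V x t b = x t a)
    (hleft : ∀ t : ℕ, lpos V x t a < x t a)
    (hright : ∀ t : ℕ, rpos V x t b > x t b)
    (hd : Tendsto (fun t => x t b - x t a) atTop (nhds V)) :
    Tendsto (fun t => x t a - lpos V x t a) atTop (nhds V) ∧
      Tendsto (fun t => rpos V x t b - x t b) atTop (nhds V) :=
  distance_propagation_general hV.le (.of_forall (hupd · a ha0 han))
    (.of_forall (hupd · b hb0 hbn)) (.of_forall hmutual) hd
end

section
/- (Convergence of the Primary Chain) In the robot model on a line, suppose there exist an integer k ≥ 1 and robots i₀ = 0, i₁, …, i_k = n, with i₁, …, i_{k−1} non-faulty, such that for every time t and every 0 ≤ j ≤ k−1: r(i_j, t) = x t i_{j+1} and l(i_{j+1}, t) = x t i_j (the sequence is a mutual chain anchored at the two faulty robots at all times). Then for every 0 ≤ j ≤ k, x t i_j → (D/k)·j as t → ∞; i.e., the robots of the primary chain converge to equidistant positions between 0 and D. -/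
/-! Along the chain the update rule is the discrete heat equation on the path `0, 1, …, k` with
fixed boundary values. The affine interpolation of those values is stationary, so the deviation
from it solves the same equation with zero boundary values. With `θ = π / k`, the identity
`sin ((j - 1) θ) + sin ((j + 1) θ) = 2 cos θ sin (j θ)` makes `cos θ ^ t * sin (j θ)` a solution
that is positive in the interior at time `0`; by comparison with a multiple of it, the deviation
decays like `cos θ ^ t`. -/

open Filter Topology

theorem midpoint_eq_add_div_two {K : Type*} [Field K] [Invertible (2 : K)] (a b : K) :
    midpoint K a b = (a + b) / 2 := by
  rw [midpoint_eq_smul_add, invOf_eq_inv, smul_eq_mul, inv_mul_eq_div]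

theorem norm_midpoint_le {E : Type*} [SeminormedAddCommGroup E] [NormedSpace ℝ E] (a b : E) :
    ‖midpoint ℝ a b‖ ≤ midpoint ℝ ‖a‖ ‖b‖ := by
  simpa [midpoint_eq_add_div_two] using dist_midpoint_midpoint_le a b 0 0

theorem exists_forall_mem_le_mul_of_pos {ι K : Type*} [Field K] [LinearOrder K]
    [IsStrictOrderedRing K] {s : Finset ι} {f g : ι → K} (hg : ∀ i ∈ s, 0 < g i) :
    ∃ C, ∀ i ∈ s, f i ≤ C * g i := by
  obtain ⟨C, hC⟩ := (s.image fun i => f i / g i).exists_le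
  exact ⟨C, fun i hi => (div_le_iff₀ (hg i hi)).1 (hC _ (Finset.mem_image_of_mem _ hi))⟩

theorem sin_natCast_mul_pi_div_pos {j k : ℕ} (hj : 0 < j) (hjk : j < k) :
    0 < Real.sin (j * (Real.pi / k)) := by
  have hk : (0 : ℝ) < k := by exact_mod_cast hj.trans hjk
  refine Real.sin_pos_of_pos_of_lt_pi (by positivity) ?_
  calc (j : ℝ) * (Real.pi / k) < k * (Real.pi / k) := by gcongr
    _ = Real.pi := mul_div_cancel₀ _ hk.ne'

theorem abs_cos_pi_div_natCast_lt_one {k : ℕ} (hk : 1 < k) : |Real.cos (Real.pi / k)| < 1 := by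
  have sin_pos : 0 < Real.sin (Real.pi / k) := by
    simpa using sin_natCast_mul_pi_div_pos one_pos hk
  rw [← sq_lt_one_iff_abs_lt_one, Real.cos_sq']
  exact sub_lt_self 1 (pow_pos sin_pos 2)

/-- The discrete heat equation on the path `0, 1, …, k`, obeyed by the positions along a mutual
chain: at each step every interior value is replaced by the midpoint of its two neighbours.
Interior vertices are written `j + 1`, which avoids truncated subtraction; the values at `0` and
`k` are unconstrained. -/
def IsHeatFlow {E : Type*} [AddCommGroup E] [Module ℝ E] (k : ℕ) (u : ℕ → ℕ → E) : Prop :=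
  ∀ t j, j + 1 < k → u (t + 1) (j + 1) = midpoint ℝ (u t j) (u t (j + 2))

namespace IsHeatFlow

section Module

variable {E : Type*} [AddCommGroup E] [Module ℝ E]

theorem sub {k : ℕ} {u v : ℕ → ℕ → E} (hu : IsHeatFlow k u) (hv : IsHeatFlow k v) :
    IsHeatFlow k (fun t j => u t j - v t j) := by
  intro t j hj
  simp only [hu t j hj, hv t j hj]
  exact midpoint_vsub_midpoint (u t j) (u t (j + 2)) (v t j) (v t (j + 2))

theorem lineMap (k : ℕ) (a b : E) :
    IsHeatFlow k (fun _ j => AffineMap.lineMap a b ((j : ℝ) / k)) := by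
  intro t j _
  have hmid : midpoint ℝ ((j : ℝ) / k) ((j + 2 : ℕ) / k) = (j + 1 : ℕ) / k := by
    rw [midpoint_eq_add_div_two]
    push_cast
    ring
  rw [← AffineMap.map_midpoint, hmid]

end Module

theorem cos_pow_mul_sin (k : ℕ) (C θ : ℝ) :
    IsHeatFlow k (fun t j => C * Real.cos θ ^ t * Real.sin (j * θ)) := by
  intro t j _
  have sin_add_sin : Real.sin (j * θ) + Real.sin ((j + 2 : ℕ) * θ) =
      2 * Real.sin ((j + 1 : ℕ) * θ) * Real.cos θ := by
    rw [Real.two_mul_sin_mul_cos]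
    push_cast
    ring_nf
  rw [midpoint_eq_add_div_two, ← mul_add, sin_add_sin]
  ring

section Norm

variable {E : Type*} [SeminormedAddCommGroup E] [NormedSpace ℝ E] {k : ℕ} {u : ℕ → ℕ → E}

theorem norm_le_of_norm_le_boundary {w : ℕ → ℕ → ℝ} (hu : IsHeatFlow k u) (hw : IsHeatFlow k w)
    (hinit : ∀ j ≤ k, ‖u 0 j‖ ≤ w 0 j) (hleft : ∀ t, ‖u t 0‖ ≤ w t 0)
    (hright : ∀ t, ‖u t k‖ ≤ w t k) (t : ℕ) {j : ℕ} (hj : j ≤ k) : ‖u t j‖ ≤ w t j := by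
  induction t generalizing j with
  | zero => exact hinit j hj
  | succ t ih =>
    obtain rfl | hjk := hj.eq_or_lt
    · exact hright _
    obtain _ | i := j
    · exact hleft _
    calc ‖u (t + 1) (i + 1)‖ = ‖midpoint ℝ (u t i) (u t (i + 2))‖ := by rw [hu t i hjk]
      _ ≤ midpoint ℝ ‖u t i‖ ‖u t (i + 2)‖ := norm_midpoint_le _ _
      _ ≤ midpoint ℝ (w t i) (w t (i + 2)) := midpoint_le_midpoint (ih (by lia)) (ih (by lia))
      _ = w (t + 1) (i + 1) := (hw t i hjk).symm

theorem exists_norm_le_mul_cos_pow_mul_sin (hu : IsHeatFlow k u) (hleft : ∀ t, u t 0 = 0)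
    (hright : ∀ t, u t k = 0) :
    ∃ C : ℝ, ∀ t, ∀ j ≤ k,
      ‖u t j‖ ≤ C * Real.cos (Real.pi / k) ^ t * Real.sin (j * (Real.pi / k)) := by
  obtain ⟨C, hC⟩ := exists_forall_mem_le_mul_of_pos (s := Finset.Ioo 0 k) (f := fun j => ‖u 0 j‖)
    (g := fun j => Real.sin (j * (Real.pi / k)))
    fun j hj => sin_natCast_mul_pi_div_pos (Finset.mem_Ioo.1 hj).1 (Finset.mem_Ioo.1 hj).2
  have sin_right : Real.sin (k * (Real.pi / k)) = 0 := by
    obtain rfl | hk := eq_or_ne k 0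
    · simp
    · rw [mul_div_cancel₀ _ (Nat.cast_ne_zero.2 hk), Real.sin_pi]
  refine ⟨C, fun t j hj => hu.norm_le_of_norm_le_boundary
    (cos_pow_mul_sin k C (Real.pi / k)) (fun i hi => ?_) (fun s => ?_) (fun s => ?_) t hj⟩
  · obtain rfl | hi0 := i.eq_zero_or_pos
    · simp [hleft]
    obtain rfl | hik := hi.eq_or_lt
    · simp [hright, sin_right]
    simpa using hC i (Finset.mem_Ioo.2 ⟨hi0, hik⟩)
  · simp [hleft]
  · simp [hright, sin_right]

theorem tendsto_zero (hu : IsHeatFlow k u) (hleft : ∀ t, u t 0 = 0) (hright : ∀ t, u t k = 0)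
    {j : ℕ} (hj : j ≤ k) : Tendsto (fun t => u t j) atTop (𝓝 0) := by
  obtain rfl | hj0 := j.eq_zero_or_pos
  · simpa only [hleft] using tendsto_const_nhds
  obtain rfl | hjk := hj.eq_or_lt
  · simpa only [hright] using tendsto_const_nhds
  obtain ⟨C, hC⟩ := hu.exists_norm_le_mul_cos_pow_mul_sin hleft hright
  have hdecay : Tendsto (fun t => Real.cos (Real.pi / k) ^ t) atTop (𝓝 0) :=
    tendsto_pow_atTop_nhds_zero_of_abs_lt_one (abs_cos_pi_div_natCast_lt_one (by lia))
  refine squeeze_zero_norm (hC · j hj) ?_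
  simpa using (hdecay.const_mul C).mul_const (Real.sin (j * (Real.pi / k)))

theorem tendsto_lineMap (hu : IsHeatFlow k u) (hk : k ≠ 0) {a b : E} (hleft : ∀ t, u t 0 = a)
    (hright : ∀ t, u t k = b) {j : ℕ} (hj : j ≤ k) :
    Tendsto (fun t => u t j) atTop (𝓝 (AffineMap.lineMap a b ((j : ℝ) / k))) := by
  have hdev : Tendsto (fun t => u t j - AffineMap.lineMap a b ((j : ℝ) / k)) atTop (𝓝 0) :=
    (hu.sub (lineMap k a b)).tendsto_zero (by simp [hleft]) (by simp [hright, hk]) hj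
  simpa using hdev.add_const (AffineMap.lineMap a b ((j : ℝ) / k))

end Norm

end IsHeatFlow

/-- (Convergence of the Primary Chain) The robots of the primary chain
converge to equidistant positions between `0` and `D`. -/
theorem primary_chain_convergence
    (n : ℕ) (hn : 2 ≤ n) (V D : ℝ) (hV : 0 < V) (hD : 0 < D)
    (x : ℕ → Fin (n + 1) → ℝ)
    (hfault0 : ∀ t : ℕ, x t 0 = 0)
    (hfaultn : ∀ t : ℕ, x t (Fin.last n) = D)
    (hupd : ∀ t : ℕ, ∀ i : Fin (n + 1), i ≠ 0 → i ≠ Fin.last n →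
      x (t + 1) i = (lpos V x t i + rpos V x t i) / 2)
    (k : ℕ) (hk : 1 ≤ k) (c : ℕ → Fin (n + 1))
    (hc0 : c 0 = 0) (hck : c k = Fin.last n)
    (hinterior : ∀ j : ℕ, 1 ≤ j → j ≤ k - 1 → c j ≠ 0 ∧ c j ≠ Fin.last n)
    (hchain : ∀ t : ℕ, ∀ j : ℕ, j < k →
      rpos V x t (c j) = x t (c (j + 1)) ∧
      lpos V x t (c (j + 1)) = x t (c j)) :
    ∀ j : ℕ, j ≤ k →
      Tendsto (fun t => x t (c j)) atTop (nhds (D / (k : ℝ) * (j : ℝ))) := by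
  have hflow : IsHeatFlow k (fun t j => x t (c j)) := by
    intro t j hj
    obtain ⟨hne0, hnen⟩ := hinterior (j + 1) (by lia) (by lia)
    calc x (t + 1) (c (j + 1))
        = (lpos V x t (c (j + 1)) + rpos V x t (c (j + 1))) / 2 := hupd t _ hne0 hnen
      _ = (x t (c j) + x t (c (j + 2))) / 2 := by
        rw [(hchain t j (by lia)).2, (hchain t (j + 1) hj).1]
      _ = midpoint ℝ (x t (c j)) (x t (c (j + 2))) := (midpoint_eq_add_div_two _ _).symm
  intro j hj
  have hlim := hflow.tendsto_lineMap (by lia) (a := 0) (b := D) (by simp [hc0, hfault0])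
    (by simp [hck, hfaultn]) hj
  have hequidistant : AffineMap.lineMap 0 D ((j : ℝ) / k) = D / k * j := by
    rw [AffineMap.lineMap_apply_ring]
    ring
  rwa [hequidistant] at hlim
end
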